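/- Let G be a finite connected regular undirected graph and let κ > 0 be a constant such that the maximal hitting time of the simple random walk on G satisfies H(G) ≤ κ|G|. Then there exists a constant c = c(κ), depending only on κ, such that the L² mixing time of the lamplighter random walk on G^◊ satisfies τ₂(G^◊) ≤ c·|G|·(T_rel(G) + log|G|). -/

import Mathlib

open Finset
open scoped Classical

namespace Paper

variable {X : Type} [Fintype X] [DecidableEq X]

/-- `P` is a stochastic matrix. -/
def IsStoch (P : Matrix X X ℝ) : Prop :=
  (∀ x y, 0 ≤ P x y) ∧ ∀ x, ∑ y, P x y = 1

/-- The uniform distribution is stationary for `P` (all columns sum to 1). -/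
def UnifStationary (P : Matrix X X ℝ) : Prop := ∀ y, ∑ x, P x y = 1

/-- Irreducibility of the chain. -/
def Irred (P : Matrix X X ℝ) : Prop := ∀ x y, ∃ n, 0 < (P ^ n) x y

/-- Probability of a trajectory `ω 0, ω 1, …, ω n` under initial distribution `μ`. -/
noncomputable def pathProb (P : Matrix X X ℝ) (μ : X → ℝ) {n : ℕ}
    (ω : Fin (n + 1) → X) : ℝ :=
  μ (ω 0) * ∏ i : Fin n, P (ω i.castSucc) (ω i.succ)

/-- Probability of an event determined by the trajectory up to time `n`. -/
noncomputable def prPath (P : Matrix X X ℝ) (μ : X → ℝ) (n : ℕ)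
    (E : (Fin (n + 1) → X) → Prop) : ℝ :=
  ∑ ω : Fin (n + 1) → X, if E ω then pathProb P μ ω else 0

/-- Expectation of a functional of the trajectory up to time `n`. -/
noncomputable def expPath (P : Matrix X X ℝ) (μ : X → ℝ) (n : ℕ)
    (f : (Fin (n + 1) → X) → ℝ) : ℝ :=
  ∑ ω : Fin (n + 1) → X, pathProb P μ ω * f ω

/-- Point mass at `x`. -/
def delta (x : X) : X → ℝ := fun z => if z = x then 1 else 0

/-- Expected hitting time `E_x[T_y]`, via `E[T] = ∑_{n ≥ 0} Pr(T > n)`. -/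
noncomputable def hitExp (P : Matrix X X ℝ) (x y : X) : ℝ :=
  (∑' n : ℕ, ENNReal.ofReal (prPath P (delta x) n (fun ω => ∀ i, ω i ≠ y))).toReal

/-- Maximal expected hitting time `H = max_{x,y} E_x[T_y]`. -/
noncomputable def maxHit (P : Matrix X X ℝ) : ℝ := ⨆ x, ⨆ y, hitExp P x y

/-- Relaxation time: `max 1/(1-|λ|)` over nontrivial eigenvalues `λ` of `P`. -/
noncomputable def Trel (P : Matrix X X ℝ) : ℝ :=
  sSup ((fun l : ℝ => 1 / (1 - |l|)) '' (spectrum ℝ P \ {1}))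

/-- The set of states not visited by the trajectory `ω` (up to its time horizon). -/
noncomputable def unvisited {n : ℕ} (ω : Fin (n + 1) → X) : Finset X :=
  Finset.univ.filter fun x => ∀ i, ω i ≠ x

/-- `Pr_x(T⁺_x ≥ s)`: the chain started at `x` does not return to `x`
at any time `i` with `1 ≤ i < s`. -/
noncomputable def prReturnGE (P : Matrix X X ℝ) (x : X) (s : ℝ) : ℝ :=
  prPath P (delta x) ⌈s⌉₊
    (fun ω => ∀ i : Fin (⌈s⌉₊ + 1), 1 ≤ (i : ℕ) → ((i : ℕ) : ℝ) < s → ω i ≠ x)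

/-- Separation distance at time `n` from state `x`. -/
noncomputable def sep (P : Matrix X X ℝ) (pi : X → ℝ) (x : X) (n : ℕ) : ℝ :=
  ⨆ y, (1 - (P ^ n) x y / pi y)

/-- Relative entropy `D(μ ‖ pi)` (with `0 log 0 = 0`). -/
noncomputable def relEnt (μ pi : X → ℝ) : ℝ := ∑ x, μ x * Real.log (μ x / pi x)

/-- Total variation distance `d_tv(μ, pi) = ∑_{y : μ y < pi y} (pi y - μ y)`. -/
noncomputable def dtv (μ pi : X → ℝ) : ℝ :=
  ∑ y ∈ Finset.univ.filter (fun y => μ y < pi y), (pi y - μ y)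

/-- Entropy decay (mixing) time. -/
noncomputable def tauEnt (P : Matrix X X ℝ) (pi : X → ℝ) (ε : ℝ) : ℕ :=
  sInf {n' | ∀ n ≥ n', ∀ x, relEnt ((P ^ n) x) pi ≤ ε}

/-- Separation mixing time. -/
noncomputable def tauSep (P : Matrix X X ℝ) (pi : X → ℝ) (ε : ℝ) : ℕ :=
  sInf {n' | ∀ n ≥ n', ∀ x, sep P pi x n ≤ ε}

/-- Total variation mixing time. -/
noncomputable def tauTV (P : Matrix X X ℝ) (pi : X → ℝ) (ε : ℝ) : ℕ :=
  sInf {n' | ∀ n ≥ n', ∀ x, dtv ((P ^ n) x) pi ≤ ε}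

/-- `L²(pi)` distance of `Pᵗ(x,·)` from `pi`. -/
noncomputable def chiDist (P : Matrix X X ℝ) (pi : X → ℝ) (t : ℕ) (x : X) : ℝ :=
  Real.sqrt (∑ y, ((P ^ t) x y / pi y - 1) ^ 2 * pi y)

/-- `L²` mixing time. -/
noncomputable def tau2 (P : Matrix X X ℝ) (pi : X → ℝ) : ℕ :=
  sInf {t | ∀ x, chiDist P pi t x ≤ 1 / 4}

/-- Uniform distribution on a finite type. -/
noncomputable def unif (Y : Type) [Fintype Y] : Y → ℝ := fun _ => (Fintype.card Y : ℝ)⁻¹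

/-- The `m`-state lamplighter chain over a base chain `Pb`:
the lamp at the current position is randomized, the lamplighter moves one step
of the base chain, and the lamp at the new position is randomized. -/
noncomputable def lampChain {V : Type} [Fintype V] [DecidableEq V]
    (Pb : Matrix V V ℝ) (m : ℕ) :
    Matrix ((V → Fin m) × V) ((V → Fin m) × V) ℝ :=
  fun p q =>
    if ∀ z, z ≠ p.2 → z ≠ q.2 → q.1 z = p.1 z then
      Pb p.2 q.2 * ((m : ℝ)⁻¹) ^ (({p.2, q.2} : Finset V).card)
    else 0

/-- Simple random walk on a `d`-regular graph. -/
noncomputable def srw {V : Type} [Fintype V] [DecidableEq V]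
    (G : SimpleGraph V) (d : ℕ) : Matrix V V ℝ :=
  fun x y => if G.Adj x y then (d : ℝ)⁻¹ else 0

/-!
A Fourier transform over the lamp configurations diagonalizes the lamps: the character indexed by a
set `S` of lamps turns the lamplighter walk into the base walk killed in `S`, whence
`1 + χ² = |G| * ∑ S, ∑ y, (K_S ^ t) x y ^ 2`, where `K_S` is the killed walk. The term `S = ∅`
measures the mixing of the base walk and is controlled by `T_rel`.

For `S ≠ ∅`, run the walk in blocks of `m ≥ T_rel` steps followed by `b` steps. The first part
nearly projects onto the constants, and on the constants the second part loses the probability that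
a stationary trajectory of length `2 * b` meets `S`. So each block multiplies the square norm of the
killed walk by at most `(1 + p_S) / 2`, where `p_S` is the probability that this trajectory misses
`S`.

Since `((1 + p_S) / 2) ^ j` is the probability that `j` independent lazy copies of the trajectory
all miss `S`, its sum over `S` is the expectation of `2 ^ N`, with `N` the number of points they
leave uncovered. This is at most `exp (θ_j * |G|)`, where the exponent `θ_j` decreases linearly
until it reaches the inverse of the length of the trajectory and geometrically afterwards. The
hypothesis on the hitting time enters through the probability that the trajectory covers a given
point: it is at least of the order of `b / |G|`.
-/

/-! ### Random covering by blocks -/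

section RandomBlock

variable {V I : Type*} [DecidableEq V] [Fintype I]

/-- The probability that the random block `B i`, with `i` drawn with weight `w i`, misses `S`. -/
noncomputable def missProb (w : I → ℝ) (B : I → Finset V) (S : Finset V) : ℝ :=
  ∑ i with Disjoint (B i) S, w i

/-- Take `j` independent lazy blocks, each of them empty with probability `1 / 2` and otherwise
distributed as `B`. This is the expectation of `2 ^ N`, where `N` counts the points of `U` that no
block covers: expand `2 ^ N` as the number of uncovered subsets of `U`. -/
noncomputable def uncoveredMoment (w : I → ℝ) (B : I → Finset V) (j : ℕ) (U : Finset V) : ℝ :=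
  ∑ S ∈ U.powerset, ((1 + missProb w B S) / 2) ^ j

/-- A random block of size at most `ℓ` that covers each point with probability at least `α`. -/
structure IsRandomBlock (w : I → ℝ) (B : I → Finset V) (ℓ α : ℝ) : Prop where
  nonneg : ∀ i, 0 ≤ w i
  sum_eq_one : ∑ i, w i = 1
  card_le : ∀ i, (#(B i) : ℝ) ≤ ℓ
  le_coverProb : ∀ y, α ≤ ∑ i with y ∈ B i, w i

variable {w : I → ℝ} {B : I → Finset V} {ℓ α : ℝ}

lemma uncoveredMoment_succ (w : I → ℝ) (B : I → Finset V) (j : ℕ) (U : Finset V) :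
    uncoveredMoment w B (j + 1) U =
      (uncoveredMoment w B j U + ∑ i, w i * uncoveredMoment w B j (U \ B i)) / 2 := by
  have powerset_sdiff (i : I) : (U \ B i).powerset = {S ∈ U.powerset | Disjoint (B i) S} := by
    ext S
    simp only [mem_powerset, mem_filter, subset_sdiff, disjoint_comm]
  have sum_sdiff : ∑ i, w i * uncoveredMoment w B j (U \ B i) =
      ∑ S ∈ U.powerset, missProb w B S * ((1 + missProb w B S) / 2) ^ j := by
    simp only [uncoveredMoment, powerset_sdiff, sum_filter, mul_sum, missProb, sum_mul]
    rw [sum_comm]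
    refine sum_congr rfl fun S _ => sum_congr rfl fun i _ => ?_
    split_ifs <;> simp
  rw [sum_sdiff, uncoveredMoment, uncoveredMoment, ← sum_add_distrib, sum_div]
  exact sum_congr rfl fun S _ => by ring

lemma uncoveredMoment_zero (w : I → ℝ) (B : I → Finset V) (U : Finset V) :
    uncoveredMoment w B 0 U = 2 ^ #U := by
  simp [uncoveredMoment]

lemma IsRandomBlock.le_one [Nonempty V] (h : IsRandomBlock w B ℓ α) : α ≤ 1 := by
  obtain ⟨y⟩ := ‹Nonempty V›
  calc α ≤ ∑ i with y ∈ B i, w i := h.le_coverProb y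
    _ ≤ ∑ i, w i := sum_le_sum_of_subset_of_nonneg (filter_subset _ _) fun i _ _ => h.nonneg i
    _ = 1 := h.sum_eq_one

lemma IsRandomBlock.missProb_empty (h : IsRandomBlock w B ℓ α) : missProb w B ∅ = 1 := by
  simp [missProb, h.sum_eq_one]

lemma IsRandomBlock.mul_card_le (h : IsRandomBlock w B ℓ α) (U : Finset V) :
    α * #U ≤ ∑ i, w i * #(U ∩ B i) := by
  calc α * #U = ∑ _y ∈ U, α := by simp [mul_comm]
    _ ≤ ∑ y ∈ U, ∑ i with y ∈ B i, w i := sum_le_sum fun y _ => h.le_coverProb y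
    _ = ∑ i, w i * #(U ∩ B i) := by
      simp only [sum_filter]
      rw [sum_comm]
      refine sum_congr rfl fun i _ => ?_
      rw [← sum_filter, filter_mem_eq_inter, sum_const, nsmul_eq_mul, mul_comm]

lemma exp_neg_mul_le_of_le {x a ℓ : ℝ} (hℓ : 0 < ℓ) (ha : 0 ≤ a) (haℓ : a ≤ ℓ) :
    Real.exp (-(x * a)) ≤ 1 - a / ℓ * (1 - Real.exp (-(ℓ * x))) := by
  have convex := convexOn_exp.2 (Set.mem_univ 0) (Set.mem_univ (-(ℓ * x)))
    (sub_nonneg.2 ((div_le_one hℓ).2 haℓ)) (div_nonneg ha hℓ.le) (sub_add_cancel 1 (a / ℓ))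
  have exponent : a / ℓ * -(ℓ * x) = -(x * a) := by field_simp
  simp only [smul_eq_mul, mul_zero, zero_add, Real.exp_zero, exponent] at convex
  linarith

lemma half_le_one_sub_exp_neg {y : ℝ} (hy : 0 ≤ y) (hy1 : y ≤ 1) :
    y / 2 ≤ 1 - Real.exp (-y) := by
  have chord := exp_neg_mul_le_of_le (x := 1) one_pos hy hy1
  have exp_neg_one_lt : Real.exp (-1) < 1 / 2 := Real.exp_neg_one_lt_d9.trans (by norm_num)
  simp only [one_mul, mul_one, div_one] at chord
  nlinarith

lemma IsRandomBlock.exp_card_sdiff_le (h : IsRandomBlock w B ℓ α) (hℓ : 0 < ℓ) (x : ℝ)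
    (U : Finset V) (i : I) :
    Real.exp (x * #(U \ B i)) ≤
      Real.exp (x * #U) * (1 - #(U ∩ B i) / ℓ * (1 - Real.exp (-(ℓ * x)))) := by
  have card_sdiff : (#(U \ B i) : ℝ) = #U - #(U ∩ B i) := by
    rw [eq_sub_iff_add_eq]
    exact_mod_cast card_sdiff_add_card_inter U (B i)
  have card_inter_le : (#(U ∩ B i) : ℝ) ≤ ℓ :=
    (Nat.cast_le.2 (card_le_card inter_subset_right)).trans (h.card_le i)
  rw [card_sdiff, mul_sub, sub_eq_add_neg, Real.exp_add]
  gcongr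
  exact exp_neg_mul_le_of_le hℓ (Nat.cast_nonneg _) card_inter_le

lemma IsRandomBlock.sum_exp_card_sdiff_le (h : IsRandomBlock w B ℓ α) (hℓ : 0 < ℓ) {x : ℝ}
    (hx : 0 ≤ x) (U : Finset V) :
    ∑ i, w i * Real.exp (x * #(U \ B i)) ≤
      Real.exp (x * #U) * (1 - α * #U / ℓ * (1 - Real.exp (-(ℓ * x)))) := by
  have one_sub_nonneg : 0 ≤ 1 - Real.exp (-(ℓ * x)) :=
    sub_nonneg.2 (Real.exp_le_one_iff.2 (neg_nonpos.2 (by positivity)))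
  calc ∑ i, w i * Real.exp (x * #(U \ B i))
      ≤ ∑ i, w i * (Real.exp (x * #U) * (1 - #(U ∩ B i) / ℓ * (1 - Real.exp (-(ℓ * x))))) := by
        gcongr with i
        · exact h.nonneg i
        · exact h.exp_card_sdiff_le hℓ x U i
    _ = Real.exp (x * #U) *
          (∑ i, w i - (∑ i, w i * #(U ∩ B i)) / ℓ * (1 - Real.exp (-(ℓ * x)))) := by
        rw [sum_div, sum_mul, ← sum_sub_distrib, mul_sum]
        exact sum_congr rfl fun i _ => by ring
    _ ≤ _ := by
        rw [h.sum_eq_one]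
        gcongr
        exact h.mul_card_le U

lemma IsRandomBlock.uncoveredMoment_succ_le (h : IsRandomBlock w B ℓ α) (hℓ : 0 < ℓ) {j : ℕ}
    {x : ℝ} (hx : 0 ≤ x) (hj : ∀ U, uncoveredMoment w B j U ≤ Real.exp (x * #U)) (U : Finset V) :
    uncoveredMoment w B (j + 1) U ≤
      Real.exp ((x - α / (2 * ℓ) * (1 - Real.exp (-(ℓ * x)))) * #U) := by
  set δ := α / (2 * ℓ) * (1 - Real.exp (-(ℓ * x))) with hδ
  calc uncoveredMoment w B (j + 1) U
      = (uncoveredMoment w B j U + ∑ i, w i * uncoveredMoment w B j (U \ B i)) / 2 :=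
        uncoveredMoment_succ w B j U
    _ ≤ (Real.exp (x * #U) + ∑ i, w i * Real.exp (x * #(U \ B i))) / 2 := by
        gcongr with i
        · exact hj U
        · exact h.nonneg i
        · exact hj _
    _ ≤ (Real.exp (x * #U) +
          Real.exp (x * #U) * (1 - α * #U / ℓ * (1 - Real.exp (-(ℓ * x))))) / 2 := by
        gcongr
        exact h.sum_exp_card_sdiff_le hℓ hx U
    _ = Real.exp (x * #U) * (1 - δ * #U) := by rw [hδ]; ring
    _ ≤ Real.exp (x * #U) * Real.exp (-(δ * #U)) := by
        gcongr
        exact Real.one_sub_le_exp_neg _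
    _ = Real.exp ((x - δ) * #U) := by rw [← Real.exp_add]; ring_nf

/-- While the exponent is at least `1 / ℓ`, a block lowers it by at least `α / (4 * ℓ)`. -/
lemma IsRandomBlock.uncoveredMoment_le_exp_max (h : IsRandomBlock w B ℓ α) (hℓ : 1 ≤ ℓ)
    (hα : 0 ≤ α) (j : ℕ) (U : Finset V) :
    uncoveredMoment w B j U ≤ Real.exp (max (1 / ℓ) (1 - j * (α / (4 * ℓ))) * #U) := by
  have hℓ0 : 0 < ℓ := one_pos.trans_le hℓ
  induction j generalizing U with
  | zero =>
    calc uncoveredMoment w B 0 U = 2 ^ #U := uncoveredMoment_zero w B U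
      _ ≤ Real.exp 1 ^ #U := by
        gcongr
        linarith [Real.add_one_le_exp 1]
      _ = Real.exp (1 * #U) := by rw [← Real.exp_nat_mul, mul_comm]
      _ ≤ _ := by
        gcongr
        simp
  | succ j ih =>
    set x := max (1 / ℓ) (1 - j * (α / (4 * ℓ))) with hx
    have one_div_le : 1 / ℓ ≤ x := le_max_left _ _
    have one_le_mul : 1 ≤ ℓ * x := by rwa [div_le_iff₀' hℓ0] at one_div_le
    have half_le : 1 / 2 ≤ 1 - Real.exp (-(ℓ * x)) :=
      (half_le_one_sub_exp_neg zero_le_one le_rfl).trans (by gcongr)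
    have decrement : α / (4 * ℓ) ≤ α / (2 * ℓ) * (1 - Real.exp (-(ℓ * x))) :=
      calc α / (4 * ℓ) = α / (2 * ℓ) * (1 / 2) := by ring
        _ ≤ _ := by gcongr
    have decrement_nonneg : 0 ≤ α / (4 * ℓ) := by positivity
    refine (h.uncoveredMoment_succ_le hℓ0 (by positivity) ih U).trans ?_
    gcongr
    calc x - α / (2 * ℓ) * (1 - Real.exp (-(ℓ * x))) ≤ x - α / (4 * ℓ) := by linarith
      _ = max (1 / ℓ - α / (4 * ℓ)) (1 - j * (α / (4 * ℓ)) - α / (4 * ℓ)) := by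
        rw [hx, max_sub_sub_right]
      _ ≤ _ := by
        refine max_le_max (by linarith) (le_of_eq ?_)
        push_cast
        ring

/-- Below `1 / ℓ`, a block shrinks the exponent by a factor of at least `1 - α / 4`. -/
lemma IsRandomBlock.uncoveredMoment_add_le [Nonempty V] (h : IsRandomBlock w B ℓ α) (hℓ : 1 ≤ ℓ)
    (hα : 0 < α) {k : ℕ} (hk : 4 * ℓ / α ≤ k) (j : ℕ) (U : Finset V) :
    uncoveredMoment w B (k + j) U ≤ Real.exp (1 / ℓ * (1 - α / 4) ^ j * #U) := by
  have hℓ0 : 0 < ℓ := one_pos.trans_le hℓ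
  have factor_nonneg : 0 ≤ 1 - α / 4 := by linarith [h.le_one]
  induction j generalizing U with
  | zero =>
    have one_le_mul : 1 ≤ k * (α / (4 * ℓ)) := by
      rw [div_le_iff₀ hα] at hk
      rwa [← mul_div_assoc, one_le_div (by positivity)]
    have le_exp := h.uncoveredMoment_le_exp_max hℓ hα.le k U
    rw [max_eq_left (by linarith [one_div_pos.2 hℓ0])] at le_exp
    simpa using le_exp
  | succ j ih =>
    have half_le := half_le_one_sub_exp_neg (pow_nonneg factor_nonneg j)
      (pow_le_one₀ factor_nonneg (by linarith))
    refine (h.uncoveredMoment_succ_le hℓ0 (by positivity) ih U).trans ?_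
    rw [one_div, mul_inv_cancel_left₀ hℓ0.ne']
    gcongr
    calc ℓ⁻¹ * (1 - α / 4) ^ j - α / (2 * ℓ) * (1 - Real.exp (-(1 - α / 4) ^ j))
        ≤ ℓ⁻¹ * (1 - α / 4) ^ j - α / (2 * ℓ) * ((1 - α / 4) ^ j / 2) := by gcongr
      _ = ℓ⁻¹ * (1 - α / 4) ^ (j + 1) := by ring

lemma IsRandomBlock.uncoveredMoment_univ [Fintype V] (h : IsRandomBlock w B ℓ α) (j : ℕ) :
    uncoveredMoment w B j univ =
      1 + ∑ S : Finset V with S.Nonempty, ((1 + missProb w B S) / 2) ^ j := by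
  have nonempty_iff : ∀ S : Finset V, S.Nonempty ↔ S ≠ ∅ := fun S => nonempty_iff_ne_empty
  simp only [uncoveredMoment, powerset_univ, nonempty_iff, filter_ne' univ]
  rw [← add_sum_erase univ _ (mem_univ ∅), h.missProb_empty]
  norm_num

lemma one_sub_pow_le_rpow_neg {a r n : ℝ} {k : ℕ} (ha : 0 < a) (ha1 : a ≤ 1) (hn : 0 < n)
    (hk : r * Real.log n / a ≤ k) : (1 - a) ^ k ≤ n ^ (-r) := by
  rw [div_le_iff₀ ha] at hk
  calc (1 - a) ^ k ≤ Real.exp (-a) ^ k :=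
        pow_le_pow_left₀ (sub_nonneg.2 ha1) (Real.one_sub_le_exp_neg a) k
    _ = Real.exp (-(k * a)) := by rw [← Real.exp_nat_mul, mul_neg]
    _ ≤ Real.exp (Real.log n * -r) := by
        gcongr
        linarith
    _ = n ^ (-r) := (Real.rpow_def_of_pos hn _).symm

lemma IsRandomBlock.card_mul_sum_nonempty_le [Fintype V] [Nontrivial V]
    (h : IsRandomBlock w B ℓ α) (hℓ : 1 ≤ ℓ) (hα : 0 < α) {k j : ℕ} (hk : 4 * ℓ / α ≤ k)
    (hj : 8 * Real.log (Fintype.card V) / (α / 4) ≤ j) :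
    (Fintype.card V : ℝ) *
      ∑ S : Finset V with S.Nonempty, ((1 + missProb w B S) / 2) ^ (k + j) ≤ 1 / 32 := by
  have two_le : (2 : ℝ) ≤ Fintype.card V := by exact_mod_cast Fintype.one_lt_card (α := V)
  set n := (Fintype.card V : ℝ)
  have n_pos : 0 < n := by linarith
  have factor_nonneg : 0 ≤ 1 - α / 4 := by linarith [h.le_one]
  set z := 1 / ℓ * (1 - α / 4) ^ j * n with hz
  have z_nonneg : 0 ≤ z := by positivity
  have moment_le : uncoveredMoment w B (k + j) univ ≤ Real.exp z := by
    simpa only [card_univ] using h.uncoveredMoment_add_le hℓ hα hk j univ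
  have z_le : z ≤ 1 / n ^ 7 := by
    have pow_le := one_sub_pow_le_rpow_neg (by positivity) (by linarith) n_pos hj
    calc z ≤ 1 * n ^ (-8 : ℝ) * n := by
          rw [hz]
          gcongr
          exact (div_le_one (by linarith)).2 hℓ
      _ = 1 / n ^ 7 := by
          rw [Real.rpow_neg n_pos.le]
          norm_cast
          field_simp
  have z_le_one : |z| ≤ 1 := by
    rw [abs_of_nonneg z_nonneg]
    exact z_le.trans ((div_le_one (by positivity)).2 (one_le_pow₀ (by linarith)))
  have exp_le : Real.exp z - 1 ≤ 2 * z := by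
    simpa only [abs_of_nonneg z_nonneg] using
      (le_abs_self _).trans (Real.abs_exp_sub_one_le z_le_one)
  calc n * ∑ S : Finset V with S.Nonempty, ((1 + missProb w B S) / 2) ^ (k + j)
      ≤ n * (2 * (1 / n ^ 7)) := by
        gcongr
        linarith [h.uncoveredMoment_univ (k + j)]
    _ = 2 / n ^ 6 := by field_simp
    _ ≤ 2 / 2 ^ 6 := by gcongr
    _ = 1 / 32 := by norm_num

end RandomBlock

/-! ### Fourier transform over the lamp configurations -/

section Lamplighter

/-- The walk `P` killed when it is in `S`, as a substochastic matrix on all of `V`. -/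
def killed {V R : Type*} [DecidableEq V] [Zero R] (P : Matrix V V R) (S : Finset V) :
    Matrix V V R :=
  Matrix.of fun x y => if x ∈ S ∨ y ∈ S then 0 else P x y

/-- The Walsh character of the lamp group `(V → Fin 2)` attached to the set of lamps `S`. -/
def lampChar {V : Type*} (S : Finset V) (η : V → Fin 2) : ℝ := ∏ z ∈ S, (-1) ^ (η z : ℕ)

lemma killed_empty {V R : Type*} [DecidableEq V] [Zero R] (P : Matrix V V R) :
    killed P ∅ = P := by
  ext x y
  simp [killed]

lemma killed_apply_nonneg {V : Type*} [DecidableEq V] {P : Matrix V V ℝ}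
    (h0 : ∀ x y, 0 ≤ P x y) (S : Finset V) (x y : V) :
    0 ≤ killed P S x y := by
  rw [killed, Matrix.of_apply]
  split_ifs
  exacts [le_rfl, h0 x y]

lemma killed_apply_le {V : Type*} [DecidableEq V] {P : Matrix V V ℝ}
    (h0 : ∀ x y, 0 ≤ P x y) (S : Finset V) (x y : V) :
    killed P S x y ≤ P x y := by
  rw [killed, Matrix.of_apply]
  split_ifs
  exacts [h0 x y, le_rfl]

lemma isSymm_killed {V : Type*} [DecidableEq V] {P : Matrix V V ℝ} (hs : P.IsSymm)
    (S : Finset V) : (killed P S).IsSymm := by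
  ext x y
  simp only [Matrix.transpose_apply, killed, Matrix.of_apply, or_comm, hs.apply]

lemma lampChar_sq {V : Type*} (S : Finset V) (η : V → Fin 2) : lampChar S η ^ 2 = 1 := by
  simp [lampChar, ← prod_pow, ← pow_mul]

lemma sum_lampChar_mul_lampChar {V : Type*} [Fintype V] (η ξ : V → Fin 2) :
    ∑ S, lampChar S η * lampChar S ξ = if η = ξ then 2 ^ Fintype.card V else 0 := by
  have one_add_neg_one_pow (a b : Fin 2) :
      1 + (-1 : ℝ) ^ (a : ℕ) * (-1) ^ (b : ℕ) = if a = b then 2 else 0 := by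
    fin_cases a <;> fin_cases b <;> norm_num
  calc ∑ S, lampChar S η * lampChar S ξ
      = ∏ z, (1 + (-1 : ℝ) ^ (η z : ℕ) * (-1) ^ (ξ z : ℕ)) := by
        simp only [prod_one_add, powerset_univ, prod_mul_distrib, lampChar]
    _ = if η = ξ then 2 ^ Fintype.card V else 0 := by
        simp only [one_add_neg_one_pow, Fintype.prod_ite_zero, prod_const, card_univ, funext_iff]

lemma sum_sq_sum_mul_lampChar {V : Type*} [Fintype V] [DecidableEq V] (f : (V → Fin 2) → ℝ) :
    ∑ S, (∑ η, f η * lampChar S η) ^ 2 = 2 ^ Fintype.card V * ∑ η, f η ^ 2 := by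
  calc ∑ S, (∑ η, f η * lampChar S η) ^ 2
      = ∑ S, ∑ η, ∑ ξ, f η * f ξ * (lampChar S η * lampChar S ξ) := by
        refine sum_congr rfl fun S _ => ?_
        rw [sq, sum_mul_sum]
        exact sum_congr rfl fun η _ => sum_congr rfl fun ξ _ => by ring
    _ = ∑ η, ∑ ξ, f η * f ξ * ∑ S, lampChar S η * lampChar S ξ := by
        rw [sum_comm]
        refine sum_congr rfl fun η _ => ?_
        rw [sum_comm]
        simp only [mul_sum]
    _ = 2 ^ Fintype.card V * ∑ η, f η ^ 2 := by
        simp only [sum_lampChar_mul_lampChar, mul_ite, mul_zero, sum_ite_eq, mem_univ, if_true,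
          mul_sum]
        exact sum_congr rfl fun η _ => by ring

variable {V : Type} [Fintype V] [DecidableEq V]

lemma lampChain_eq_mul_prod (P : Matrix V V ℝ) (m : ℕ) (η ξ : V → Fin m) (x y : V) :
    lampChain P m (η, x) (ξ, y) = P x y *
      ∏ z, if z ∈ ({x, y} : Finset V) then (m : ℝ)⁻¹ else if ξ z = η z then 1 else 0 := by
  rw [lampChain]
  split_ifs with hξ
  · have factor_eq (z : V) :
        (if z ∈ ({x, y} : Finset V) then (m : ℝ)⁻¹ else if ξ z = η z then 1 else 0) =
          if z ∈ ({x, y} : Finset V) then (m : ℝ)⁻¹ else 1 := by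
      split_ifs with hz hne
      · rfl
      · rfl
      · simp only [mem_insert, mem_singleton, not_or] at hz
        exact absurd (hξ z hz.1 hz.2) hne
    simp only [factor_eq, prod_ite_mem, univ_inter, prod_const]
  · push Not at hξ
    obtain ⟨z, hzx, hzy, hne⟩ := hξ
    rw [prod_eq_zero (mem_univ z) (by simp [hzx, hzy, hne]), mul_zero]

lemma sum_prod_mul_lampChar (E S : Finset V) (η : V → Fin 2) :
    ∑ ξ : V → Fin 2, (∏ z, if z ∈ E then (2 : ℝ)⁻¹ else if ξ z = η z then 1 else 0) *
      lampChar S ξ = if Disjoint E S then lampChar S η else 0 := by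
  have sum_site (z : V) :
      ∑ b : Fin 2, (if z ∈ E then (2 : ℝ)⁻¹ else if b = η z then 1 else 0) *
        (if z ∈ S then (-1) ^ (b : ℕ) else 1) =
      if z ∈ S then if z ∈ E then 0 else (-1) ^ (η z : ℕ) else 1 := by
    split_ifs <;> simp
  have lampChar_eq (ξ : V → Fin 2) :
      lampChar S ξ = ∏ z, if z ∈ S then (-1) ^ (ξ z : ℕ) else 1 := by
    simp [lampChar, prod_ite_mem]
  calc _ = ∏ z, ∑ b : Fin 2, (if z ∈ E then (2 : ℝ)⁻¹ else if b = η z then 1 else 0) *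
        (if z ∈ S then (-1) ^ (b : ℕ) else 1) := by
        simp only [lampChar_eq, ← prod_mul_distrib, prod_univ_sum, Fintype.piFinset_univ]
    _ = ∏ z ∈ S, if z ∈ E then 0 else (-1) ^ (η z : ℕ) := by
        simp only [sum_site, prod_ite_mem, univ_inter]
    _ = if Disjoint E S then lampChar S η else 0 := by
        split_ifs with hES
        · exact prod_congr rfl fun z hz => if_neg (disjoint_right.1 hES hz)
        · obtain ⟨z, hzE, hzS⟩ := not_disjoint_iff.1 hES
          exact prod_eq_zero hzS (if_pos hzE)

/-- Randomizing a lamp of `S` annihilates the character `S`, so characters turn the lamplighter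
walk into the walk killed in `S`. -/
lemma sum_lampChain_mul_lampChar (P : Matrix V V ℝ) (S : Finset V) (η : V → Fin 2) (x y : V) :
    ∑ ξ, lampChain P 2 (η, x) (ξ, y) * lampChar S ξ = lampChar S η * killed P S x y := by
  simp only [lampChain_eq_mul_prod, mul_assoc, ← mul_sum, Nat.cast_ofNat, sum_prod_mul_lampChar,
    killed, Matrix.of_apply, disjoint_insert_left, disjoint_singleton_left, ← not_or, ite_not]
  split_ifs <;> ring

lemma sum_lampChain_pow_mul_lampChar (P : Matrix V V ℝ) (S : Finset V) (t : ℕ) (η : V → Fin 2)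
    (x y : V) :
    ∑ ξ, (lampChain P 2 ^ t) (η, x) (ξ, y) * lampChar S ξ =
      lampChar S η * (killed P S ^ t) x y := by
  induction t generalizing η x with
  | zero => by_cases hxy : x = y <;> simp [Matrix.one_apply, hxy]
  | succ t ih =>
    calc ∑ ξ, (lampChain P 2 ^ (t + 1)) (η, x) (ξ, y) * lampChar S ξ
        = ∑ q, lampChain P 2 (η, x) q *
            ∑ ξ, (lampChain P 2 ^ t) q (ξ, y) * lampChar S ξ := by
          simp only [pow_succ', Matrix.mul_apply, sum_mul, mul_sum, mul_assoc]
          rw [sum_comm]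
      _ = ∑ z, (∑ ξ, lampChain P 2 (η, x) (ξ, z) * lampChar S ξ) * (killed P S ^ t) z y := by
          simp only [Fintype.sum_prod_type_right, ih, sum_mul, mul_assoc]
      _ = lampChar S η * (killed P S ^ (t + 1)) x y := by
          simp only [sum_lampChain_mul_lampChar, pow_succ', Matrix.mul_apply, mul_sum, mul_assoc]

lemma sum_sq_div_unif_sub_one {Y : Type} [Fintype Y] {r : Y → ℝ} (hr : ∑ y, r y = 1) :
    ∑ y, (r y / unif Y y - 1) ^ 2 * unif Y y = Fintype.card Y * ∑ y, r y ^ 2 - 1 := by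
  have card_ne_zero : (Fintype.card Y : ℝ) ≠ 0 := by
    rintro card_eq_zero
    rw [Nat.cast_eq_zero, Fintype.card_eq_zero_iff] at card_eq_zero
    simp at hr
  have term_eq (y : Y) : (r y / unif Y y - 1) ^ 2 * unif Y y =
      Fintype.card Y * r y ^ 2 - 2 * r y + (Fintype.card Y : ℝ)⁻¹ := by
    rw [unif]
    field_simp
    ring
  simp only [term_eq, sum_add_distrib, sum_sub_distrib, ← mul_sum, hr, sum_const, card_univ,
    nsmul_eq_mul, mul_inv_cancel₀ card_ne_zero]
  ring

lemma sum_lampChain_pow {P : Matrix V V ℝ} (hP : P ∈ Matrix.rowStochastic ℝ V) (t : ℕ)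
    (p : (V → Fin 2) × V) : ∑ q, (lampChain P 2 ^ t) p q = 1 := by
  have marginal (y : V) : ∑ ξ, (lampChain P 2 ^ t) p (ξ, y) = (P ^ t) p.2 y := by
    simpa [lampChar, killed_empty] using sum_lampChain_pow_mul_lampChar P ∅ t p.1 p.2 y
  simp only [Fintype.sum_prod_type_right, marginal]
  exact Matrix.sum_row_of_mem_rowStochastic (pow_mem hP t) p.2

lemma chiDist_lampChain {P : Matrix V V ℝ} (hP : P ∈ Matrix.rowStochastic ℝ V) (t : ℕ)
    (p : (V → Fin 2) × V) :
    chiDist (lampChain P 2) (unif _) t p =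
      √(Fintype.card V * ∑ S, ∑ y, (killed P S ^ t) p.2 y ^ 2 - 1) := by
  have plancherel (y : V) : 2 ^ Fintype.card V * ∑ ξ, (lampChain P 2 ^ t) p (ξ, y) ^ 2 =
      ∑ S, (killed P S ^ t) p.2 y ^ 2 := by
    rw [← sum_sq_sum_mul_lampChar fun ξ => (lampChain P 2 ^ t) p (ξ, y)]
    refine sum_congr rfl fun S _ => ?_
    rw [sum_lampChain_pow_mul_lampChar P S t p.1 p.2 y, mul_pow, lampChar_sq, one_mul]
  rw [chiDist, sum_sq_div_unif_sub_one (sum_lampChain_pow hP t p), sum_comm]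
  simp only [← plancherel, ← mul_sum, Fintype.sum_prod_type_right]
  congr 2
  simp only [Fintype.card_prod, Fintype.card_pi, Fintype.card_fin, prod_const, card_univ]
  push_cast
  ring

end Lamplighter

/-! ### Avoidance probabilities -/

section Avoidance

open scoped Matrix

/-- `avoidProb P S n x` is the probability that the walk `P` started at `x` stays outside of `S`
at the `n` times `0, …, n - 1`. -/
def avoidProb {V : Type*} [Fintype V] [DecidableEq V] (P : Matrix V V ℝ) (S : Finset V) :
    ℕ → V → ℝ
  | 0 => 1
  | n + 1 => fun x => if x ∈ S then 0 else (P *ᵥ avoidProb P S n) x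

section

variable {V : Type*} [Fintype V] [DecidableEq V] {P : Matrix V V ℝ}

lemma avoidProb_succ (P : Matrix V V ℝ) (S : Finset V) (n : ℕ) (x : V) :
    avoidProb P S (n + 1) x = if x ∈ S then 0 else (P *ᵥ avoidProb P S n) x :=
  rfl

lemma avoidProb_nonneg (hP : P ∈ Matrix.rowStochastic ℝ V) (S : Finset V) (n : ℕ) (x : V) :
    0 ≤ avoidProb P S n x := by
  induction n generalizing x with
  | zero => exact zero_le_one
  | succ n ih =>
    rw [avoidProb_succ]
    split_ifs
    exacts [le_rfl, Matrix.nonneg_mulVec_of_mem_rowStochastic hP ih x]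

lemma avoidProb_antitone (hP : P ∈ Matrix.rowStochastic ℝ V) (S : Finset V) :
    Antitone (avoidProb P S) := by
  refine antitone_nat_of_succ_le fun n => ?_
  induction n with
  | zero =>
    intro x
    simp only [avoidProb, hP.2]
    split_ifs
    exacts [zero_le_one, le_rfl]
  | succ n ih =>
    intro x
    rw [avoidProb_succ P S (n + 1), avoidProb_succ P S n]
    split_ifs
    · exact le_rfl
    · exact dotProduct_le_dotProduct_of_nonneg_left ih fun y => hP.1 x y

lemma avoidProb_le_one (hP : P ∈ Matrix.rowStochastic ℝ V) (S : Finset V) (n : ℕ) (x : V) :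
    avoidProb P S n x ≤ 1 :=
  avoidProb_antitone hP S (Nat.zero_le n) x

lemma killed_mulVec_avoidProb_succ (P : Matrix V V ℝ) (S : Finset V) (n : ℕ) :
    killed P S *ᵥ avoidProb P S (n + 1) = avoidProb P S (n + 2) := by
  ext x
  rw [avoidProb_succ P S (n + 1)]
  split_ifs with hx
  · simp [Matrix.mulVec, dotProduct, killed, hx]
  · refine sum_congr rfl fun y _ => ?_
    by_cases hy : y ∈ S <;> simp [killed, avoidProb, hx, hy]

lemma killed_pow_succ_mulVec_one (hP : P ∈ Matrix.rowStochastic ℝ V) (S : Finset V) (n : ℕ) :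
    (killed P S ^ (n + 1)) *ᵥ 1 = avoidProb P S (n + 2) := by
  induction n with
  | zero =>
    rw [← killed_mulVec_avoidProb_succ, zero_add, pow_one]
    ext x
    refine sum_congr rfl fun y _ => ?_
    by_cases hy : y ∈ S <;> simp [killed, avoidProb, hP.2, hy]
  | succ n ih => rw [pow_succ', ← Matrix.mulVec_mulVec, ih, killed_mulVec_avoidProb_succ]

/-- By stationarity this is the probability of first entering `S` at time `n`, which decreases
with `n`. -/
lemma antitone_sum_avoidProb_sub (hP : P ∈ doublyStochastic ℝ V) (S : Finset V) :
    Antitone fun n => ∑ x, (avoidProb P S n x - avoidProb P S (n + 1) x) := by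
  have hrow := (mem_doublyStochastic_iff_mem_rowStochastic_and_mem_colStochastic.1 hP).1
  refine antitone_nat_of_succ_le fun n => ?_
  have sub_nonneg : 0 ≤ avoidProb P S n - avoidProb P S (n + 1) :=
    sub_nonneg.2 (avoidProb_antitone hrow S n.le_succ)
  calc ∑ x, (avoidProb P S (n + 1) x - avoidProb P S (n + 2) x)
      ≤ ∑ x, (P *ᵥ (avoidProb P S n - avoidProb P S (n + 1))) x := by
        refine sum_le_sum fun x _ => ?_
        rw [avoidProb_succ P S n, avoidProb_succ P S (n + 1)]
        split_ifs
        · simpa only [sub_zero] using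
            Matrix.nonneg_mulVec_of_mem_rowStochastic hrow sub_nonneg x
        · rw [Matrix.mulVec_sub, Pi.sub_apply]
    _ = ∑ x, (avoidProb P S n x - avoidProb P S (n + 1) x) :=
        sum_mulVec_of_mem_doublyStochastic hP

lemma mul_sum_range_le_mul_sum_range {d : ℕ → ℝ} (hd : Antitone d) {a b : ℕ} (hab : a ≤ b) :
    a * ∑ k ∈ range b, d k ≤ b * ∑ k ∈ range a, d k := by
  induction b, hab using Nat.le_induction with
  | base => exact le_rfl
  | succ b hab ih =>
    have mul_le : a * d b ≤ ∑ k ∈ range a, d k := by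
      simpa using card_nsmul_le_sum (range a) d (d b) fun k hk =>
        hd ((mem_range.1 hk).le.trans hab)
    rw [sum_range_succ]
    push_cast
    linarith

lemma mul_card_sub_sum_avoidProb_le (hP : P ∈ doublyStochastic ℝ V) (S : Finset V) {a b : ℕ}
    (hab : a ≤ b) :
    a * (Fintype.card V - ∑ x, avoidProb P S b x) ≤
      b * (Fintype.card V - ∑ x, avoidProb P S a x) := by
  have telescope (k : ℕ) :
      ∑ i ∈ range k, ∑ x, (avoidProb P S i x - avoidProb P S (i + 1) x) =
        Fintype.card V - ∑ x, avoidProb P S k x := by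
    rw [sum_comm]
    simp only [sum_range_sub' fun i => avoidProb P S i _, sum_sub_distrib]
    simp [avoidProb]
  simpa only [telescope] using mul_sum_range_le_mul_sum_range (antitone_sum_avoidProb_sub hP S) hab

end

section PathProbability

lemma pathProb_cons {V : Type} (P : Matrix V V ℝ) (μ : V → ℝ) {n : ℕ} (x : V)
    (ω : Fin (n + 1) → V) :
    pathProb P μ (Fin.cons x ω : Fin (n + 2) → V) = μ x * pathProb P (P x) ω := by
  simp [pathProb, Fin.prod_univ_succ]

variable {V : Type} [Fintype V] [DecidableEq V]

lemma prPath_zero_avoid (P : Matrix V V ℝ) (μ : V → ℝ) (S : Finset V) :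
    prPath P μ 0 (fun ω => ∀ i, ω i ∉ S) = ∑ x, if x ∈ S then 0 else μ x := by
  rw [prPath, ← (Equiv.funUnique (Fin 1) V).symm.sum_comp]
  refine sum_congr rfl fun x _ => ?_
  by_cases hx : x ∈ S <;> simp [pathProb, hx]

lemma prPath_succ_avoid (P : Matrix V V ℝ) (μ : V → ℝ) (S : Finset V) (n : ℕ) :
    prPath P μ (n + 1) (fun ω => ∀ i, ω i ∉ S) =
      ∑ x, if x ∈ S then 0 else μ x * prPath P (P x) n fun ω => ∀ i, ω i ∉ S := by
  rw [prPath, ← (Fin.consEquiv fun _ : Fin (n + 2) => V).sum_comp, Fintype.sum_prod_type]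
  refine sum_congr rfl fun x _ => ?_
  simp only [Fin.consEquiv, Equiv.coe_fn_mk, pathProb_cons]
  by_cases hx : x ∈ S
  · simp [Fin.forall_fin_succ, hx]
  · simp [Fin.forall_fin_succ (n := n + 1), hx, prPath, mul_sum]

lemma prPath_avoid {P : Matrix V V ℝ} (hP : P ∈ Matrix.rowStochastic ℝ V) (μ : V → ℝ)
    (S : Finset V) (n : ℕ) :
    prPath P μ n (fun ω => ∀ i, ω i ∉ S) = ∑ x, μ x * avoidProb P S (n + 1) x := by
  induction n generalizing μ with
  | zero =>
    rw [prPath_zero_avoid]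
    refine sum_congr rfl fun x _ => ?_
    simp [avoidProb, hP.2]
  | succ n ih =>
    rw [prPath_succ_avoid]
    refine sum_congr rfl fun x _ => ?_
    rw [ih, avoidProb_succ P S (n + 1), mul_ite, mul_zero]
    rfl

end PathProbability

end Avoidance

/-! ### Decay of the killed walk in `L²` -/

section KilledWalk

open scoped Matrix

variable {V : Type*} [Fintype V]

lemma sum_sq_mulVec_le {K : Matrix V V ℝ} (h0 : ∀ x y, 0 ≤ K x y) (hrow : ∀ x, ∑ y, K x y ≤ 1)
    (hcol : ∀ y, ∑ x, K x y ≤ 1) (f : V → ℝ) :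
    ∑ x, (K *ᵥ f) x ^ 2 ≤ ∑ x, f x ^ 2 := by
  have cauchySchwarz (x : V) : (K *ᵥ f) x ^ 2 ≤ ∑ y, K x y * f y ^ 2 :=
    calc (∑ y, K x y * f y) ^ 2 ≤ (∑ y, K x y) * ∑ y, K x y * f y ^ 2 :=
          sum_sq_le_sum_mul_sum_of_sq_le_mul _ (fun y _ => h0 x y)
            (fun y _ => mul_nonneg (h0 x y) (sq_nonneg _)) fun y _ => le_of_eq (by ring)
      _ ≤ ∑ y, K x y * f y ^ 2 := mul_le_of_le_one_left
          (sum_nonneg fun y _ => mul_nonneg (h0 x y) (sq_nonneg _)) (hrow x)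
  calc ∑ x, (K *ᵥ f) x ^ 2 ≤ ∑ x, ∑ y, K x y * f y ^ 2 := sum_le_sum fun x _ => cauchySchwarz x
    _ = ∑ y, (∑ x, K x y) * f y ^ 2 := by
      rw [sum_comm]
      simp only [sum_mul]
    _ ≤ ∑ y, f y ^ 2 := sum_le_sum fun y _ => mul_le_of_le_one_left (sq_nonneg _) (hcol y)

lemma exists_const_add_meanZero [Nonempty V] (f : V → ℝ) :
    ∃ (a : ℝ) (g : V → ℝ), f = a • 1 + g ∧ ∑ x, g x = 0 := by
  have card_ne_zero : (Fintype.card V : ℝ) ≠ 0 := Nat.cast_ne_zero.2 Fintype.card_ne_zero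
  refine ⟨(∑ x, f x) / Fintype.card V, fun x => f x - (∑ x, f x) / Fintype.card V,
    by ext; simp, ?_⟩
  rw [sum_sub_distrib, sum_const, card_univ, nsmul_eq_mul, mul_div_cancel₀ _ card_ne_zero, sub_self]

lemma sum_sq_const_add_meanZero {g : V → ℝ} (hg : ∑ x, g x = 0) (a : ℝ) :
    ∑ x, (a • 1 + g) x ^ 2 = a ^ 2 * Fintype.card V + ∑ x, g x ^ 2 :=
  calc ∑ x, (a • 1 + g) x ^ 2 = ∑ x, (a ^ 2 + 2 * a * g x + g x ^ 2) :=
        sum_congr rfl fun x _ => by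
          simp only [Pi.add_apply, Pi.smul_apply, Pi.one_apply, smul_eq_mul]
          ring
    _ = a ^ 2 * Fintype.card V + ∑ x, g x ^ 2 := by
        simp only [sum_add_distrib, ← mul_sum, hg, sum_const, card_univ, nsmul_eq_mul]
        ring

lemma sum_sq_mulVec_const_add {A : Matrix V V ℝ} (hA : A.IsSymm) (a : ℝ) (h : V → ℝ) :
    ∑ x, (A *ᵥ (a • 1 + h)) x ^ 2 =
      a ^ 2 * ∑ x, ((A * A) *ᵥ 1) x + 2 * a * ∑ x, ((A * A) *ᵥ 1) x * h x +
        ∑ x, (A *ᵥ h) x ^ 2 := by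
  have adjoint (u : V → ℝ) : ∑ x, ((A * A) *ᵥ 1) x * u x = ∑ x, (A *ᵥ 1) x * (A *ᵥ u) x := by
    change ((A * A) *ᵥ 1) ⬝ᵥ u = (A *ᵥ 1) ⬝ᵥ (A *ᵥ u)
    rw [Matrix.dotProduct_mulVec, ← Matrix.mulVec_transpose, hA, Matrix.mulVec_mulVec]
  have adjoint_one : ∑ x, ((A * A) *ᵥ 1) x = ∑ x, (A *ᵥ 1) x * (A *ᵥ 1) x := by
    simpa using adjoint 1
  rw [adjoint_one, adjoint h, mul_sum, mul_sum, ← sum_add_distrib, ← sum_add_distrib]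
  refine sum_congr rfl fun x _ => ?_
  simp only [Matrix.mulVec_add, Matrix.mulVec_smul, Pi.add_apply, Pi.smul_apply, smul_eq_mul]
  ring

lemma two_mul_sum_mul_le {w h : V → ℝ} (hw0 : ∀ x, 0 ≤ w x) (hw1 : ∀ x, w x ≤ 1)
    (hh : ∑ x, h x = 0) (a : ℝ) :
    2 * a * ∑ x, w x * h x ≤ a ^ 2 / 2 * (Fintype.card V - ∑ x, w x) + 2 * ∑ x, h x ^ 2 := by
  have pointwise (x : V) :
      2 * a * (w x * h x) ≤ 2 * a * h x + a ^ 2 / 2 * (1 - w x) + 2 * h x ^ 2 := by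
    have sq_le : a ^ 2 * (1 - w x) ^ 2 ≤ a ^ 2 * (1 - w x) := by
      gcongr
      exact pow_le_of_le_one (sub_nonneg.2 (hw1 x)) (by linarith [hw0 x]) two_ne_zero
    nlinarith [sq_nonneg (a * (1 - w x) + 2 * h x)]
  calc 2 * a * ∑ x, w x * h x = ∑ x, 2 * a * (w x * h x) := mul_sum ..
    _ ≤ ∑ x, (2 * a * h x + a ^ 2 / 2 * (1 - w x) + 2 * h x ^ 2) :=
        sum_le_sum fun x _ => pointwise x
    _ = _ := by simp [sum_add_distrib, ← mul_sum, hh]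

lemma mul_apply_mono {A B C D : Matrix V V ℝ} (hA : ∀ x y, 0 ≤ A x y)
    (hB : ∀ x y, 0 ≤ B x y) (hAC : ∀ x y, A x y ≤ C x y) (hBD : ∀ x y, B x y ≤ D x y) (x y : V) :
    (A * B) x y ≤ (C * D) x y := by
  rw [Matrix.mul_apply, Matrix.mul_apply]
  gcongr with z
  exacts [hB z y, (hA x z).trans (hAC x z), hAC x z, hBD z y]

/-- The operator `P` shrinks the square of the `ℓ²` norm of functions of mean zero by the
factor `r`. -/
def ContractsMeanZero (P : Matrix V V ℝ) (r : ℝ) : Prop :=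
  ∀ g : V → ℝ, ∑ x, g x = 0 → ∑ x, (P *ᵥ g) x ^ 2 ≤ r * ∑ x, g x ^ 2

variable [DecidableEq V] {P : Matrix V V ℝ}

lemma sum_sq_pow_mulVec_le {A : Matrix V V ℝ} {r : ℝ} {W : Set (V → ℝ)} (hr : 0 ≤ r)
    (hW : Set.MapsTo (A *ᵥ ·) W W)
    (hA : ∀ f ∈ W, ∑ x, (A *ᵥ f) x ^ 2 ≤ r * ∑ x, f x ^ 2) (k : ℕ) {f : V → ℝ} (hf : f ∈ W) :
    ∑ x, ((A ^ k) *ᵥ f) x ^ 2 ≤ r ^ k * ∑ x, f x ^ 2 := by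
  induction k generalizing f with
  | zero => simp
  | succ k ih =>
    calc ∑ x, ((A ^ (k + 1)) *ᵥ f) x ^ 2 = ∑ x, ((A ^ k) *ᵥ (A *ᵥ f)) x ^ 2 := by
          rw [pow_succ, Matrix.mulVec_mulVec]
      _ ≤ r ^ k * ∑ x, (A *ᵥ f) x ^ 2 := ih (hW hf)
      _ ≤ r ^ k * (r * ∑ x, f x ^ 2) := by
          gcongr
          exact hA f hf
      _ = r ^ (k + 1) * ∑ x, f x ^ 2 := by ring

lemma ContractsMeanZero.pow {r : ℝ} (h : ContractsMeanZero P r) (hP : P ∈ doublyStochastic ℝ V)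
    (hr : 0 ≤ r) (k : ℕ) : ContractsMeanZero (P ^ k) (r ^ k) := fun _ hg =>
  sum_sq_pow_mulVec_le (W := {g | ∑ x, g x = 0}) hr
    (fun _ hf => (sum_mulVec_of_mem_doublyStochastic hP).trans hf) h k hg

lemma mem_doublyStochastic_of_isSymm (hP : P ∈ Matrix.rowStochastic ℝ V) (hs : P.IsSymm) :
    P ∈ doublyStochastic ℝ V :=
  ⟨hP.1, hP.2, by rw [← Matrix.mulVec_transpose, hs, hP.2]⟩

lemma sum_sq_killed_pow_mulVec_le (hP : P ∈ doublyStochastic ℝ V) (S : Finset V) (k : ℕ)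
    (f : V → ℝ) : ∑ x, ((killed P S ^ k) *ᵥ f) x ^ 2 ≤ ∑ x, f x ^ 2 := by
  have le_apply := killed_apply_le hP.1 S
  have contraction (g : V → ℝ) : ∑ x, (killed P S *ᵥ g) x ^ 2 ≤ ∑ x, g x ^ 2 :=
    sum_sq_mulVec_le (killed_apply_nonneg hP.1 S)
      (fun x => (sum_le_sum fun y _ => le_apply x y).trans_eq
        (sum_row_of_mem_doublyStochastic hP x))
      (fun y => (sum_le_sum fun x _ => le_apply x y).trans_eq
        (sum_col_of_mem_doublyStochastic hP y)) g
  simpa using sum_sq_pow_mulVec_le (r := 1) zero_le_one (Set.mapsTo_univ _ Set.univ)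
    (fun g _ => by simpa using contraction g) k (Set.mem_univ f)

/-- The `m` free steps nearly equidistribute the walk; then the `b` killed steps, applied to a
constant, lose the mass of the trajectories that meet `S`. -/
lemma sum_sq_killed_pow_mul_pow_mulVec_le [Nonempty V] (hP : P ∈ Matrix.rowStochastic ℝ V)
    (hs : P.IsSymm) {m b : ℕ} (hm : ContractsMeanZero (P ^ m) (1 / 6)) (hb : b ≠ 0)
    (S : Finset V) (f : V → ℝ) :
    ∑ x, ((killed P S ^ b * P ^ m) *ᵥ f) x ^ 2 ≤
      (1 + (∑ x, avoidProb P S (2 * b + 1) x) / Fintype.card V) / 2 * ∑ x, f x ^ 2 := by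
  have hdP := mem_doublyStochastic_of_isSymm hP hs
  set w := avoidProb P S (2 * b + 1) with hw
  have sum_w_nonneg : 0 ≤ ∑ x, w x := sum_nonneg fun x _ => avoidProb_nonneg hP S _ x
  have killed_sq_one : (killed P S ^ b * killed P S ^ b) *ᵥ 1 = w := by
    obtain ⟨c, rfl⟩ := Nat.exists_eq_succ_of_ne_zero hb
    rw [← pow_add, show c.succ + c.succ = 2 * c + 1 + 1 by omega,
      killed_pow_succ_mulVec_one hP S (2 * c + 1)]
    rfl
  obtain ⟨a, g, rfl, hg⟩ := exists_const_add_meanZero f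
  set h := (P ^ m) *ᵥ g
  have sum_h : ∑ x, h x = 0 := (sum_mulVec_of_mem_doublyStochastic (pow_mem hdP m)).trans hg
  have norm_h_le : ∑ x, h x ^ 2 ≤ 1 / 6 * ∑ x, g x ^ 2 := hm g hg
  have cross_le := two_mul_sum_mul_le (avoidProb_nonneg hP S (2 * b + 1))
    (avoidProb_le_one hP S (2 * b + 1)) sum_h a
  have norm_killed_h_le := sum_sq_killed_pow_mulVec_le hdP S b h
  have mul_nonneg : 0 ≤ (∑ x, w x) / Fintype.card V * ∑ x, g x ^ 2 := by positivity
  calc ∑ x, ((killed P S ^ b * P ^ m) *ᵥ (a • 1 + g)) x ^ 2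
      = ∑ x, ((killed P S ^ b) *ᵥ (a • 1 + h)) x ^ 2 := by
        rw [← Matrix.mulVec_mulVec, Matrix.mulVec_add, Matrix.mulVec_smul, (pow_mem hP m).2]
    _ = a ^ 2 * ∑ x, w x + 2 * a * ∑ x, w x * h x + ∑ x, ((killed P S ^ b) *ᵥ h) x ^ 2 := by
        rw [sum_sq_mulVec_const_add ((isSymm_killed hs S).pow b), killed_sq_one]
    _ ≤ a ^ 2 * (Fintype.card V + ∑ x, w x) / 2 + 1 / 2 * ∑ x, g x ^ 2 := by linarith
    _ ≤ a ^ 2 * (Fintype.card V + ∑ x, w x) / 2 + 1 / 2 * ∑ x, g x ^ 2 +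
          (∑ x, w x) / Fintype.card V * (∑ x, g x ^ 2) / 2 := by linarith
    _ = (1 + (∑ x, w x) / Fintype.card V) / 2 * ∑ x, (a • 1 + g) x ^ 2 := by
        rw [sum_sq_const_add_meanZero hg]
        field_simp
        ring

lemma pow_apply_mono {A C : Matrix V V ℝ} (hA : ∀ x y, 0 ≤ A x y) (hAC : ∀ x y, A x y ≤ C x y)
    (k : ℕ) (x y : V) : (A ^ k) x y ≤ (C ^ k) x y := by
  induction k generalizing x y with
  | zero => exact le_rfl
  | succ k ih =>
    rw [pow_succ, pow_succ]
    exact mul_apply_mono (Matrix.pow_apply_nonneg hA k) hA ih hAC x y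

lemma killed_pow_apply_le (h0 : ∀ x y, 0 ≤ P x y) (S : Finset V) (b m k : ℕ) (x y : V) :
    (killed P S ^ ((b + m) * k)) x y ≤ ((killed P S ^ b * P ^ m) ^ k) x y := by
  have nonneg := Matrix.pow_apply_nonneg (killed_apply_nonneg h0 S)
  rw [pow_mul]
  refine pow_apply_mono (nonneg (b + m)) (fun u v => ?_) k x y
  rw [pow_add]
  exact mul_apply_mono (nonneg b) (nonneg m) (fun _ _ => le_rfl)
    (pow_apply_mono (killed_apply_nonneg h0 S) (killed_apply_le h0 S) m) u v

lemma sum_sq_killed_pow_apply_le [Nonempty V] (hP : P ∈ Matrix.rowStochastic ℝ V)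
    (hs : P.IsSymm) {m b : ℕ} (hm : ContractsMeanZero (P ^ m) (1 / 6)) (hb : b ≠ 0)
    (S : Finset V) (k : ℕ) (x : V) :
    ∑ y, (killed P S ^ ((b + m) * k)) x y ^ 2 ≤
      ((1 + (∑ y, avoidProb P S (2 * b + 1) y) / Fintype.card V) / 2) ^ k := by
  set r := (1 + (∑ y, avoidProb P S (2 * b + 1) y) / Fintype.card V) / 2
  have hr : 0 ≤ r := by
    have := sum_nonneg fun y (_ : y ∈ univ) => avoidProb_nonneg hP S (2 * b + 1) y
    positivity
  calc ∑ y, (killed P S ^ ((b + m) * k)) x y ^ 2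
      = ∑ y, (killed P S ^ ((b + m) * k)) y x ^ 2 := by
        simp only [((isSymm_killed hs S).pow _).apply x]
    _ ≤ ∑ y, ((killed P S ^ b * P ^ m) ^ k) y x ^ 2 := by
        gcongr with y
        · exact Matrix.pow_apply_nonneg (killed_apply_nonneg hP.1 S) _ y x
        · exact killed_pow_apply_le hP.1 S b m k y x
    _ = ∑ y, (((killed P S ^ b * P ^ m) ^ k) *ᵥ Pi.single x 1) y ^ 2 := by simp
    _ ≤ r ^ k * ∑ y, (Pi.single x 1 : V → ℝ) y ^ 2 :=
        sum_sq_pow_mulVec_le hr (Set.mapsTo_univ _ Set.univ)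
          (fun f _ => sum_sq_killed_pow_mul_pow_mulVec_le hP hs hm hb S f) k (Set.mem_univ _)
    _ = r ^ k := by simp [Pi.single_apply]

end KilledWalk

/-! ### Hitting times -/

section HittingTime

open scoped Matrix

section

variable {V : Type*} [Fintype V] [DecidableEq V] {P : Matrix V V ℝ}

lemma eq_zero_of_le_mulVec (hP : P ∈ doublyStochastic ℝ V)
    (hirr : ∀ x y, ∃ n, 0 < (P ^ n) x y) {f : V → ℝ} (hf : 0 ≤ f) (hle : f ≤ P *ᵥ f) {y : V}
    (hy : f y = 0) : f = 0 := by
  have harmonic : P *ᵥ f = f := by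
    have sum_eq : ∑ x, f x = ∑ x, (P *ᵥ f) x := (sum_mulVec_of_mem_doublyStochastic hP).symm
    ext x
    exact ((sum_eq_sum_iff_of_le fun x _ => hle x).1 sum_eq x (mem_univ x)).symm
  have harmonic_pow (n : ℕ) : (P ^ n) *ᵥ f = f := by
    induction n with
    | zero => rw [pow_zero, Matrix.one_mulVec]
    | succ n ih => rw [pow_succ, ← Matrix.mulVec_mulVec, harmonic, ih]
  ext z
  obtain ⟨n, hn⟩ := hirr y z
  have sum_eq_zero : ∑ x, (P ^ n) y x * f x = 0 := (congrFun (harmonic_pow n) y).trans hy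
  have term_eq_zero := (sum_eq_zero_iff_of_nonneg fun x _ =>
    mul_nonneg ((pow_mem hP n).1 y x) (hf x)).1 sum_eq_zero z (mem_univ z)
  exact (mul_eq_zero.1 term_eq_zero).resolve_left hn.ne'

lemma eq_zero_of_killed_mulVec_eq_self (hP : P ∈ doublyStochastic ℝ V)
    (hirr : ∀ x y, ∃ n, 0 < (P ^ n) x y) {y : V} {f : V → ℝ} (hf : killed P {y} *ᵥ f = f) :
    f = 0 := by
  have abs_le : (fun x => |f x|) ≤ P *ᵥ fun x => |f x| := fun x =>
    calc |f x| = |∑ z, killed P {y} x z * f z| := congrArg abs (congrFun hf x).symm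
      _ ≤ ∑ z, |killed P {y} x z * f z| := abs_sum_le_sum_abs ..
      _ ≤ ∑ z, P x z * |f z| := by
        gcongr with z
        rw [abs_mul, abs_of_nonneg (killed_apply_nonneg hP.1 {y} x z)]
        gcongr
        exact killed_apply_le hP.1 {y} x z
  have apply_eq_zero : f y = 0 := by
    rw [← hf]
    simp [Matrix.mulVec, dotProduct, killed]
  have absf_eq_zero := eq_zero_of_le_mulVec hP hirr (fun x => abs_nonneg (f x)) abs_le
    (show |f y| = 0 by rw [apply_eq_zero, abs_zero])
  ext x
  exact abs_eq_zero.1 (congrFun absf_eq_zero x)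

lemma isUnit_one_sub_killed (hP : P ∈ doublyStochastic ℝ V)
    (hirr : ∀ x y, ∃ n, 0 < (P ^ n) x y) (y : V) : IsUnit (1 - killed P {y}) := by
  rw [← Matrix.mulVec_injective_iff_isUnit]
  intro f g hfg
  have sub_fixed : (1 - killed P {y}) *ᵥ (f - g) = 0 := by
    rw [Matrix.mulVec_sub]
    exact sub_eq_zero.2 hfg
  rw [Matrix.sub_mulVec, Matrix.one_mulVec, sub_eq_zero] at sub_fixed
  exact sub_eq_zero.1 (eq_zero_of_killed_mulVec_eq_self hP hirr sub_fixed.symm)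

lemma summable_avoidProb_singleton (hP : P ∈ doublyStochastic ℝ V)
    (hirr : ∀ x y, ∃ n, 0 < (P ^ n) x y) (x y : V) :
    Summable fun n => avoidProb P {y} (n + 1) x := by
  have hrow := (mem_doublyStochastic_iff_mem_rowStochastic_and_mem_colStochastic.1 hP).1
  obtain ⟨B, hB⟩ := (isUnit_one_sub_killed hP hirr y).exists_left_inv
  set v : ℕ → V → ℝ := fun n => avoidProb P {y} (n + 1)
  have telescope (N : ℕ) : ∑ n ∈ range N, v n = B *ᵥ (v 0 - v N) := by
    have one_sub_mulVec (n : ℕ) : (1 - killed P {y}) *ᵥ v n = v n - v (n + 1) := by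
      rw [Matrix.sub_mulVec, Matrix.one_mulVec, killed_mulVec_avoidProb_succ]
    rw [← sum_range_sub', ← Finset.sum_congr rfl fun n _ => one_sub_mulVec n,
      ← Matrix.mulVec_sum, Matrix.mulVec_mulVec, hB, Matrix.one_mulVec]
  refine summable_of_sum_range_le (c := ∑ z, |B x z|) (fun n => avoidProb_nonneg hrow _ _ x)
    fun N => ?_
  calc ∑ n ∈ range N, v n x = ∑ z, B x z * (v 0 z - v N z) := by
        rw [← Finset.sum_apply, telescope]
        rfl
    _ ≤ ∑ z, |B x z| := by
        gcongr with z
        have sub_nonneg : 0 ≤ v 0 z - v N z :=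
          sub_nonneg.2 (avoidProb_antitone hrow {y} (by omega) z)
        have sub_le_one : v 0 z - v N z ≤ 1 := by
          linarith [avoidProb_le_one hrow {y} 1 z, avoidProb_nonneg hrow {y} (N + 1) z]
        exact (mul_le_mul_of_nonneg_right (le_abs_self _) sub_nonneg).trans
          (mul_le_of_le_one_right (abs_nonneg _) sub_le_one)

end

variable {V : Type} [Fintype V] [DecidableEq V] {P : Matrix V V ℝ}

lemma hitExp_eq_tsum_avoidProb (hP : P ∈ doublyStochastic ℝ V) (hirr : Irred P) (x y : V) :
    hitExp P x y = ∑' n, avoidProb P {y} (n + 1) x := by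
  have hrow := (mem_doublyStochastic_iff_mem_rowStochastic_and_mem_colStochastic.1 hP).1
  have prPath_eq (n : ℕ) :
      prPath P (delta x) n (fun ω => ∀ i, ω i ≠ y) = avoidProb P {y} (n + 1) x := by
    simpa [delta] using prPath_avoid hrow (delta x) {y} n
  have nonneg (n : ℕ) : 0 ≤ avoidProb P {y} (n + 1) x := avoidProb_nonneg hrow {y} (n + 1) x
  simp only [hitExp, prPath_eq]
  rw [← ENNReal.ofReal_tsum_of_nonneg nonneg (summable_avoidProb_singleton hP hirr x y),
    ENNReal.toReal_ofReal (tsum_nonneg nonneg)]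

lemma hitExp_le_maxHit (P : Matrix V V ℝ) (x y : V) : hitExp P x y ≤ maxHit P :=
  (le_ciSup (Set.finite_range fun y => hitExp P x y).bddAbove y).trans
    (le_ciSup (Set.finite_range fun x => ⨆ y, hitExp P x y).bddAbove x)

lemma mul_avoidProb_le_maxHit (hP : P ∈ doublyStochastic ℝ V) (hirr : Irred P) (x y : V)
    (N : ℕ) : N * avoidProb P {y} N x ≤ maxHit P := by
  have hrow := (mem_doublyStochastic_iff_mem_rowStochastic_and_mem_colStochastic.1 hP).1
  calc N * avoidProb P {y} N x = ∑ _n ∈ range N, avoidProb P {y} N x := by simp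
    _ ≤ ∑ n ∈ range N, avoidProb P {y} (n + 1) x := sum_le_sum fun n hn =>
        avoidProb_antitone hrow {y} (mem_range.1 hn) x
    _ ≤ ∑' n, avoidProb P {y} (n + 1) x :=
        (summable_avoidProb_singleton hP hirr x y).sum_le_tsum _ fun n _ =>
          avoidProb_nonneg hrow {y} (n + 1) x
    _ ≤ maxHit P := hitExp_eq_tsum_avoidProb hP hirr x y ▸ hitExp_le_maxHit P x y

end HittingTime

/-! ### The spectral gap -/

section SpectralGap

open scoped Matrix

variable {V : Type*} [Fintype V] {P : Matrix V V ℝ}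

lemma sum_sq_pos {v : V → ℝ} (hv : v ≠ 0) : 0 < ∑ x, v x ^ 2 := by
  obtain ⟨x, hx⟩ := Function.ne_iff.1 hv
  exact sum_pos' (fun _ _ => sq_nonneg _) ⟨x, mem_univ x, sq_pos_of_ne_zero hx⟩

lemma sq_le_of_eigenvector {v : V → ℝ} {l r : ℝ} (hv : v ≠ 0) (hl : P *ᵥ v = l • v)
    (h : ∑ x, (P *ᵥ v) x ^ 2 ≤ r * ∑ x, v x ^ 2) : l ^ 2 ≤ r := by
  simp only [hl, Pi.smul_apply, smul_eq_mul, mul_pow, ← mul_sum] at h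
  exact le_of_mul_le_mul_right h (sum_sq_pos hv)

variable [DecidableEq V]

lemma mem_spectrum_iff_exists_mulVec {l : ℝ} :
    l ∈ spectrum ℝ P ↔ ∃ v ≠ 0, P *ᵥ v = l • v := by
  rw [← Matrix.spectrum_toLin', ← Module.End.hasEigenvalue_iff_mem_spectrum]
  constructor
  · intro h
    obtain ⟨v, hv⟩ := h.exists_hasEigenvector
    exact ⟨v, hv.2, hv.apply_eq_smul⟩
  · rintro ⟨v, hv, hl⟩
    exact Module.End.hasEigenvalue_of_hasEigenvector
      ⟨Module.End.mem_eigenspace_iff.2 (by rw [Matrix.toLin'_apply, hl]), hv⟩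

lemma pow_mulVec_eigenvector {v : V → ℝ} {l : ℝ} (hl : P *ᵥ v = l • v) (t : ℕ) :
    (P ^ t) *ᵥ v = l ^ t • v := by
  induction t with
  | zero => simp
  | succ t ih =>
    rw [pow_succ, ← Matrix.mulVec_mulVec, hl, Matrix.mulVec_smul, ih, smul_smul, pow_succ']

lemma ContractsMeanZero.abs_eigenvalue_lt_one {t : ℕ} {r : ℝ} (h : ContractsMeanZero (P ^ t) r)
    (hr : r < 1) {v : V → ℝ} {l : ℝ} (hv : v ≠ 0) (hv_sum : ∑ x, v x = 0) (hl : P *ᵥ v = l • v) :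
    |l| < 1 := by
  have sq_lt_one : (l ^ t) ^ 2 < 1 :=
    (sq_le_of_eigenvector hv (pow_mulVec_eigenvector hl t) (h v hv_sum)).trans_lt hr
  by_contra! one_le
  rw [sq_lt_one_iff_abs_lt_one, abs_pow] at sq_lt_one
  exact (one_le_pow₀ one_le).not_gt sq_lt_one

lemma exists_const_add_meanZero_eigenvector [Nonempty V] (hP : P ∈ doublyStochastic ℝ V)
    {v : V → ℝ} {l : ℝ} (hl : P *ᵥ v = l • v) :
    ∃ (a : ℝ) (u : V → ℝ), v = a • 1 + u ∧ ∑ x, u x = 0 ∧ P *ᵥ u = l • u := by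
  have card_ne_zero : (Fintype.card V : ℝ) ≠ 0 := Nat.cast_ne_zero.2 Fintype.card_ne_zero
  obtain ⟨a, u, rfl, hu⟩ := exists_const_add_meanZero v
  refine ⟨a, u, rfl, hu, ?_⟩
  rw [Matrix.mulVec_add, Matrix.mulVec_smul, hP.2.1, smul_add] at hl
  have const_eq : a = l * a := by
    have sum_eq := congrArg (fun f : V → ℝ => ∑ x, f x) hl
    simp only [Pi.add_apply, Pi.smul_apply, Pi.one_apply, smul_eq_mul, mul_one, sum_add_distrib,
      sum_mulVec_of_mem_doublyStochastic hP, ← mul_sum, hu, sum_const, card_univ, nsmul_eq_mul,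
      mul_zero, add_zero] at sum_eq
    exact mul_left_cancel₀ card_ne_zero (sum_eq.trans (mul_left_comm ..))
  rw [smul_smul, ← const_eq] at hl
  exact add_left_cancel hl

lemma contractsMeanZero_sq [Nonempty V] (hP : P ∈ Matrix.rowStochastic ℝ V) (hs : P.IsSymm) {r : ℝ}
    (hr : ∀ (l : ℝ) (v : V → ℝ), v ≠ 0 → ∑ x, v x = 0 → P *ᵥ v = l • v → |l| ≤ r) :
    ContractsMeanZero P (r ^ 2) := by
  intro g hg
  have hdP := mem_doublyStochastic_of_isSymm hP hs
  have hA : P.IsHermitian := by rwa [Matrix.isHermitian_iff_isSymm]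
  set v : V → V → ℝ := fun i => hA.eigenvectorBasis i
  set l := hA.eigenvalues
  have hv (i : V) : P *ᵥ v i = l i • v i := hA.mulVec_eigenvectorBasis i
  have parseval (f : V → ℝ) : ∑ i, (v i ⬝ᵥ f) ^ 2 = ∑ x, f x ^ 2 := by
    have := hA.eigenvectorBasis.sum_sq_inner_right (WithLp.toLp 2 f)
    rw [EuclideanSpace.real_norm_sq_eq] at this
    rw [← this]
    refine sum_congr rfl fun i _ => ?_
    rw [EuclideanSpace.inner_eq_star_dotProduct, dotProduct_comm, star_trivial]
  have dotProduct_mulVec (i : V) : v i ⬝ᵥ (P *ᵥ g) = l i * (v i ⬝ᵥ g) := by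
    rw [Matrix.dotProduct_mulVec, ← Matrix.mulVec_transpose, hs, hv, smul_dotProduct, smul_eq_mul]
  have orthogonal_or_abs_le (i : V) : v i ⬝ᵥ g = 0 ∨ |l i| ≤ r := by
    obtain ⟨a, u, hv_eq, hu, hPu⟩ := exists_const_add_meanZero_eigenvector hdP (hv i)
    by_cases hu0 : u = 0
    · left
      rw [hv_eq, hu0, add_zero, smul_dotProduct, one_dotProduct, hg, smul_zero]
    · exact Or.inr (hr (l i) u hu0 hu hPu)
  calc ∑ x, (P *ᵥ g) x ^ 2 = ∑ i, (l i * (v i ⬝ᵥ g)) ^ 2 := by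
        rw [← parseval]
        simp only [dotProduct_mulVec]
    _ ≤ ∑ i, r ^ 2 * (v i ⬝ᵥ g) ^ 2 := by
        refine sum_le_sum fun i _ => ?_
        rcases orthogonal_or_abs_le i with h | h
        · simp [h]
        · rw [mul_pow]
          gcongr ?_ * _
          exact sq_le_sq' (by linarith [abs_le.1 h]) (abs_le.1 h).2
    _ = r ^ 2 * ∑ x, g x ^ 2 := by rw [← mul_sum, parseval]

lemma exists_meanZero_eigenvector [Nontrivial V] (hP : P ∈ Matrix.rowStochastic ℝ V)
    (hs : P.IsSymm) : ∃ (l : ℝ) (v : V → ℝ), v ≠ 0 ∧ ∑ x, v x = 0 ∧ P *ᵥ v = l • v := by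
  by_contra! h
  obtain ⟨a, b, hab⟩ := exists_pair_ne V
  set g : V → ℝ := Pi.single a 1 - Pi.single b 1 with hg
  have sum_g : ∑ x, g x = 0 := by simp [hg]
  have hle := contractsMeanZero_sq hP hs (r := 0)
    (fun l v hv hv_sum hl => absurd hl (h l v hv hv_sum)) g sum_g
  have mulVec_g : P *ᵥ g = (0 : ℝ) • g := by
    by_contra hne
    rw [zero_smul] at hne
    linarith [sum_sq_pos hne]
  refine h 0 g (Function.ne_iff.2 ⟨a, ?_⟩) sum_g mulVec_g
  simp [hg, hab]

lemma ContractsMeanZero.card_mul_sum_sq_le [Nonempty V] {r : ℝ} (h : ContractsMeanZero P r)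
    (hr : 0 ≤ r) (hP : P ∈ doublyStochastic ℝ V) (x : V) :
    Fintype.card V * ∑ y, P y x ^ 2 ≤ 1 + Fintype.card V * r := by
  obtain ⟨a, g, single_eq, hg⟩ := exists_const_add_meanZero (Pi.single x 1 : V → ℝ)
  have card_mul : Fintype.card V * a = 1 := by
    simpa [hg, sum_add_distrib] using congrArg (fun f : V → ℝ => ∑ y, f y) single_eq.symm
  have norm_g_le : ∑ y, g y ^ 2 ≤ 1 := by
    have norm_eq := sum_sq_const_add_meanZero hg a
    rw [← single_eq] at norm_eq
    simp only [Pi.single_apply, ite_pow, one_pow, ne_eq, OfNat.ofNat_ne_zero, not_false_eq_true,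
      zero_pow, sum_ite_eq', mem_univ, if_true] at norm_eq
    have : 0 ≤ a ^ 2 * Fintype.card V := by positivity
    linarith
  have column_eq : ∑ y, P y x ^ 2 = a ^ 2 * Fintype.card V + ∑ y, (P *ᵥ g) y ^ 2 := by
    rw [← sum_sq_const_add_meanZero ((sum_mulVec_of_mem_doublyStochastic hP).trans hg)]
    refine sum_congr rfl fun y _ => ?_
    have := congrFun (congrArg (P *ᵥ ·) single_eq) y
    simp only [Matrix.mulVec_add, Matrix.mulVec_smul, hP.2.1, Matrix.mulVec_single_one] at this
    rw [← this]
    rfl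
  calc Fintype.card V * ∑ y, P y x ^ 2
      = (Fintype.card V * a) ^ 2 + Fintype.card V * ∑ y, (P *ᵥ g) y ^ 2 := by
        rw [column_eq]
        ring
    _ ≤ 1 + Fintype.card V * r := by
        rw [card_mul, one_pow]
        gcongr
        exact (h g hg).trans (mul_le_of_le_one_right hr norm_g_le)

end SpectralGap

/-! ### The relaxation time -/

section RelaxationTime

open scoped Matrix

variable {V : Type} [Fintype V] {P : Matrix V V ℝ}

lemma contractsMeanZero_of_card_mul_sum_sq_le [Nonempty V] {r : ℝ}
    (hrow : ∀ x, ∑ y, P x y = 1) (h : ∀ x, Fintype.card V * ∑ y, P x y ^ 2 - 1 ≤ r) :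
    ContractsMeanZero P r := by
  intro g hg
  have card_ne_zero : (Fintype.card V : ℝ) ≠ 0 := Nat.cast_ne_zero.2 Fintype.card_ne_zero
  have mulVec_eq (x : V) : (P *ᵥ g) x = ∑ y, (P x y / unif V y - 1) * unif V y * g y := by
    have term_eq (y : V) : (P x y / unif V y - 1) * unif V y * g y =
        P x y * g y - (Fintype.card V : ℝ)⁻¹ * g y := by
      rw [unif]
      field_simp
    simp only [term_eq, sum_sub_distrib, ← mul_sum, hg, mul_zero, sub_zero]
    rfl
  have unif_nonneg (y : V) : 0 ≤ unif V y := inv_nonneg.2 (Nat.cast_nonneg _)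
  have cauchySchwarz (x : V) :
      (P *ᵥ g) x ^ 2 ≤ r * ((Fintype.card V : ℝ)⁻¹ * ∑ y, g y ^ 2) :=
    calc (P *ᵥ g) x ^ 2
        ≤ (∑ y, (P x y / unif V y - 1) ^ 2 * unif V y) * ∑ y, unif V y * g y ^ 2 := by
          rw [mulVec_eq]
          exact sum_sq_le_sum_mul_sum_of_sq_le_mul _
            (fun y _ => mul_nonneg (sq_nonneg _) (unif_nonneg y))
            (fun y _ => mul_nonneg (unif_nonneg y) (sq_nonneg _)) fun y _ => le_of_eq (by ring)
      _ ≤ r * ((Fintype.card V : ℝ)⁻¹ * ∑ y, g y ^ 2) := by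
          rw [sum_sq_div_unif_sub_one (hrow x), mul_sum univ _ (Fintype.card V : ℝ)⁻¹]
          exact mul_le_mul_of_nonneg_right (h x)
            (sum_nonneg fun y _ => mul_nonneg (unif_nonneg y) (sq_nonneg _))
  calc ∑ x, (P *ᵥ g) x ^ 2
      ≤ ∑ _x : V, r * ((Fintype.card V : ℝ)⁻¹ * ∑ y, g y ^ 2) :=
        sum_le_sum fun x _ => cauchySchwarz x
    _ = r * ∑ y, g y ^ 2 := by
        rw [sum_const, card_univ, nsmul_eq_mul]
        field_simp

variable [DecidableEq V]

lemma Trel_nonneg (hP : P ∈ doublyStochastic ℝ V) : 0 ≤ Trel P := by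
  refine Real.sSup_nonneg ?_
  rintro _ ⟨l, ⟨hl, -⟩, rfl⟩
  obtain ⟨v, hv, hlv⟩ := mem_spectrum_iff_exists_mulVec.1 hl
  have contraction : ∑ x, (P *ᵥ v) x ^ 2 ≤ 1 * ∑ x, v x ^ 2 := by
    simpa using sum_sq_mulVec_le hP.1 (fun x => (sum_row_of_mem_doublyStochastic hP x).le)
      (fun y => (sum_col_of_mem_doublyStochastic hP y).le) v
  have abs_le_one : |l| ≤ 1 :=
    (sq_le_one_iff_abs_le_one l).1 (sq_le_of_eigenvector hv hlv contraction)
  exact one_div_nonneg.2 (sub_nonneg.2 abs_le_one)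

lemma one_div_one_sub_abs_le_Trel {l : ℝ} (hl : l ∈ spectrum ℝ P) (hl1 : l ≠ 1) :
    1 / (1 - |l|) ≤ Trel P :=
  le_csSup ((Matrix.finite_real_spectrum.subset Set.sdiff_subset).image _).bddAbove
    ⟨l, ⟨hl, hl1⟩, rfl⟩

lemma ContractsMeanZero.one_le_mul_Trel {t : ℕ} {r : ℝ} (h : ContractsMeanZero (P ^ t) r)
    (hr : r < 1) {v : V → ℝ} {l : ℝ} (hv : v ≠ 0) (hv_sum : ∑ x, v x = 0) (hl : P *ᵥ v = l • v) :
    1 ≤ Trel P * (1 - |l|) := by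
  have abs_lt_one := h.abs_eigenvalue_lt_one hr hv hv_sum hl
  refine (div_le_iff₀ (sub_pos.2 abs_lt_one)).1 (one_div_one_sub_abs_le_Trel
    (mem_spectrum_iff_exists_mulVec.2 ⟨v, hv, hl⟩) ?_)
  rintro rfl
  simp at abs_lt_one

lemma ContractsMeanZero.one_le_Trel [Nontrivial V] {t : ℕ} {r : ℝ}
    (h : ContractsMeanZero (P ^ t) r) (hr : r < 1) (hP : P ∈ Matrix.rowStochastic ℝ V)
    (hs : P.IsSymm) : 1 ≤ Trel P := by
  obtain ⟨l, v, hv, hv_sum, hl⟩ := exists_meanZero_eigenvector hP hs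
  have Trel_nonneg := Trel_nonneg (mem_doublyStochastic_of_isSymm hP hs)
  exact (h.one_le_mul_Trel hr hv hv_sum hl).trans
    (mul_le_of_le_one_right Trel_nonneg (by linarith [abs_nonneg l]))

lemma ContractsMeanZero.contractsMeanZero_Trel [Nontrivial V] {t : ℕ} {r : ℝ}
    (h : ContractsMeanZero (P ^ t) r) (hr : r < 1) (hP : P ∈ Matrix.rowStochastic ℝ V)
    (hs : P.IsSymm) : ContractsMeanZero P ((1 - 1 / Trel P) ^ 2) := by
  have Trel_pos : 0 < Trel P := one_pos.trans_le (h.one_le_Trel hr hP hs)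
  refine contractsMeanZero_sq hP hs fun l v hv hv_sum hl => ?_
  rw [le_sub_comm, div_le_iff₀' Trel_pos]
  exact h.one_le_mul_Trel hr hv hv_sum hl

end RelaxationTime

/-! ### Covering by stationary trajectories -/

section Trajectory

variable {V : Type} [Fintype V] [DecidableEq V] {P : Matrix V V ℝ}

lemma missProb_trajectory (hP : P ∈ Matrix.rowStochastic ℝ V) (S : Finset V) (n : ℕ) :
    missProb (pathProb P (unif V)) (fun ω : Fin (n + 1) → V => univ.image ω) S =
      (∑ x, avoidProb P S (n + 1) x) / Fintype.card V := by
  have prPath_eq := prPath_avoid hP (unif V) S n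
  simp only [unif, ← mul_sum] at prPath_eq
  rw [div_eq_inv_mul, ← prPath_eq, prPath, missProb, sum_filter]
  refine sum_congr rfl fun ω _ => ?_
  have disjoint_iff : Disjoint (univ.image ω) S ↔ ∀ i, ω i ∉ S := by simp [disjoint_left]
  by_cases h : Disjoint (univ.image ω) S
  · rw [if_pos h, if_pos (disjoint_iff.1 h)]
  · rw [if_neg h, if_neg (h ∘ disjoint_iff.2)]

lemma avoidProb_empty (hP : P ∈ Matrix.rowStochastic ℝ V) (n : ℕ) : avoidProb P ∅ n = 1 := by
  induction n with
  | zero => rfl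
  | succ n ih =>
    ext x
    rw [avoidProb_succ, ih, hP.2, if_neg (notMem_empty x)]

lemma isRandomBlock_trajectory [Nonempty V] (hP : P ∈ doublyStochastic ℝ V) {n N : ℕ}
    (hnN : n + 1 ≤ N) (hN : ∀ x y, avoidProb P {y} N x ≤ 1 / 2) :
    IsRandomBlock (pathProb P (unif V)) (fun ω : Fin (n + 1) → V => univ.image ω)
      (n + 1) ((n + 1) / (2 * N)) := by
  have hrow := (mem_doublyStochastic_iff_mem_rowStochastic_and_mem_colStochastic.1 hP).1
  have card_pos : 0 < (Fintype.card V : ℝ) := Nat.cast_pos.2 Fintype.card_pos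
  have N_pos : 0 < (N : ℝ) := Nat.cast_pos.2 (by omega)
  have sum_eq_one : ∑ ω : Fin (n + 1) → V, pathProb P (unif V) ω = 1 := by
    simpa [missProb, avoidProb_empty hrow, card_pos.ne'] using missProb_trajectory hrow ∅ n
  refine ⟨fun ω => ?_, sum_eq_one, fun ω => ?_, fun y => ?_⟩
  · exact mul_nonneg (inv_nonneg.2 (Nat.cast_nonneg _)) (prod_nonneg fun i _ => hP.1 _ _)
  · exact_mod_cast card_image_le.trans_eq (card_fin (n + 1))
  · have half_le : (Fintype.card V : ℝ) / 2 ≤ Fintype.card V - ∑ x, avoidProb P {y} N x := by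
      have := sum_le_card_nsmul univ _ _ fun x _ => hN x y
      rw [card_univ, nsmul_eq_mul] at this
      linarith
    have missProb_eq := missProb_trajectory hrow {y} n
    have window := mul_card_sub_sum_avoidProb_le hP {y} hnN
    have split := sum_filter_add_sum_filter_not univ
      (fun ω : Fin (n + 1) → V => y ∈ univ.image ω) (pathProb P (unif V))
    simp only [missProb, disjoint_singleton_right] at missProb_eq
    rw [sum_eq_one, missProb_eq] at split
    calc ((n : ℝ) + 1) / (2 * N) = (n + 1) * (Fintype.card V / 2) / (N * Fintype.card V) := by
          field_simp
      _ ≤ (n + 1 : ℕ) * (Fintype.card V - ∑ x, avoidProb P {y} N x) / (N * Fintype.card V) := by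
          push_cast
          gcongr
      _ ≤ N * (Fintype.card V - ∑ x, avoidProb P {y} (n + 1) x) / (N * Fintype.card V) := by
          gcongr
      _ = 1 - (∑ x, avoidProb P {y} (n + 1) x) / Fintype.card V := by field_simp
      _ = _ := by linarith

end Trajectory

/-! ### Mixing of the lamplighter walk -/

section Mixing

variable {V : Type} [Fintype V] [DecidableEq V] {P : Matrix V V ℝ}

lemma sq_one_sub_one_div_pow_le_exp {T : ℝ} (hT : 1 ≤ T) (t : ℕ) :
    ((1 - 1 / T) ^ 2) ^ t ≤ Real.exp (-(2 * t / T)) := by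
  have nonneg : 0 ≤ 1 - 1 / T := sub_nonneg.2 ((div_le_one (by linarith)).2 hT)
  calc ((1 - 1 / T) ^ 2) ^ t = (1 - 1 / T) ^ (2 * t) := (pow_mul ..).symm
    _ ≤ Real.exp (-(1 / T)) ^ (2 * t) := by
        gcongr
        exact Real.one_sub_le_exp_neg (1 / T)
    _ = Real.exp (-(2 * t / T)) := by
        rw [← Real.exp_nat_mul]
        push_cast
        ring_nf

lemma ContractsMeanZero.pow_of_le {T : ℝ} (h : ContractsMeanZero P ((1 - 1 / T) ^ 2))
    (hP : P ∈ doublyStochastic ℝ V) (hT : 1 ≤ T) {m : ℕ} (hm : T ≤ m) :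
    ContractsMeanZero (P ^ m) (1 / 6) := by
  intro g hg
  have exp_neg_two_le : Real.exp (-2) ≤ 1 / 6 := by
    have := Real.exp_neg_one_lt_d9
    rw [show (-2 : ℝ) = -1 + -1 by norm_num, Real.exp_add]
    nlinarith [Real.exp_pos (-1)]
  have pow_le : ((1 - 1 / T) ^ 2) ^ m ≤ 1 / 6 := by
    refine (sq_one_sub_one_div_pow_le_exp hT m).trans (le_trans ?_ exp_neg_two_le)
    gcongr
    rw [le_div_iff₀ (by linarith)]
    linarith
  refine (h.pow hP (sq_nonneg _) m g hg).trans ?_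
  gcongr

lemma card_mul_sum_sq_pow_le [Nonempty V] {T : ℝ} (h : ContractsMeanZero P ((1 - 1 / T) ^ 2))
    (hP : P ∈ Matrix.rowStochastic ℝ V) (hs : P.IsSymm) (hT : 1 ≤ T) {t : ℕ}
    (ht : 16 * Fintype.card V * T ≤ t) (x : V) :
    Fintype.card V * ∑ y, (P ^ t) x y ^ 2 ≤ 1 + 1 / 32 := by
  have hdP := mem_doublyStochastic_of_isSymm hP hs
  have exp_le : Real.exp (-(2 * t / T)) ≤ 1 / (32 * Fintype.card V) := by
    have le_div : 32 * Fintype.card V ≤ 2 * t / T := by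
      rw [le_div_iff₀ (by linarith)]
      linarith
    rw [Real.exp_neg, ← one_div]
    gcongr
    linarith [Real.add_one_le_exp (2 * t / T)]
  simp only [← (hs.pow t).apply x]
  calc Fintype.card V * ∑ y, (P ^ t) y x ^ 2
      ≤ 1 + Fintype.card V * ((1 - 1 / T) ^ 2) ^ t :=
        (h.pow hdP (sq_nonneg _) t).card_mul_sum_sq_le (by positivity) (pow_mem hdP t) x
    _ ≤ 1 + Fintype.card V * (1 / (32 * Fintype.card V)) := by
        gcongr
        exact (sq_one_sub_one_div_pow_le_exp hT t).trans exp_le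
    _ = 1 + 1 / 32 := by field_simp

lemma card_mul_sum_nonempty_sum_sq_killed_pow_le [Nontrivial V]
    (hP : P ∈ Matrix.rowStochastic ℝ V) (hs : P.IsSymm) {m b N j : ℕ}
    (hm : ContractsMeanZero (P ^ m) (1 / 6)) (hb : b ≠ 0) (hbN : 2 * b + 1 ≤ N)
    (hN : ∀ x y, avoidProb P {y} N x ≤ 1 / 2)
    (hj : 64 * N * Real.log (Fintype.card V) / (2 * b + 1) ≤ j) (x : V) :
    Fintype.card V * ∑ S : Finset V with S.Nonempty,
      ∑ y, (killed P S ^ ((b + m) * (8 * N + j))) x y ^ 2 ≤ 1 / 32 := by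
  have block := isRandomBlock_trajectory (mem_doublyStochastic_of_isSymm hP hs) hbN hN
  push_cast at block
  have N_pos : 0 < (N : ℝ) := Nat.cast_pos.2 (by omega)
  refine le_trans ?_ (block.card_mul_sum_nonempty_le (k := 8 * N) (j := j) ?_ ?_ ?_ ?_)
  · simp only [missProb_trajectory hP]
    gcongr with S
    exact sum_sq_killed_pow_apply_le hP hs hm hb S (8 * N + j) x
  · linarith [Nat.cast_nonneg (α := ℝ) b]
  · positivity
  · refine le_of_eq ?_
    push_cast
    field_simp
    ring
  · refine le_of_eq_of_le ?_ hj
    field_simp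
    ring

lemma min_add_le_two_mul_min_add_one_mul (m : ℕ) {n : ℕ} (hn : n ≠ 0) :
    (min m n : ℕ) + (m : ℝ) ≤ (2 * (min m n : ℕ) + 1) * (1 + m / n) := by
  have n_pos : 0 < (n : ℝ) := Nat.cast_pos.2 (Nat.pos_of_ne_zero hn)
  have ratio_nonneg : 0 ≤ (m : ℝ) / n := by positivity
  rcases le_total m n with hmn | hnm
  · rw [min_eq_left hmn]
    nlinarith [mul_nonneg m.cast_nonneg ratio_nonneg]
  · rw [min_eq_right hnm]
    have : (2 * (n : ℝ) + 1) * (1 + m / n) = 2 * n + 1 + 2 * m + m / n := by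
      field_simp
      ring
    linarith [n_pos, (Nat.cast_nonneg m : (0 : ℝ) ≤ m)]

lemma block_length_mul_block_count_le {κ T m b N j n : ℝ} (hκ : 1 ≤ κ) (hT : 1 ≤ T) (hn : 1 ≤ n)
    (hm0 : 0 ≤ m) (hm : m ≤ 2 * T) (hb : 0 ≤ b) (hbm : b ≤ m) (hN0 : 0 ≤ N) (hN : N ≤ 3 * κ * n)
    (hj : j ≤ 64 * N * Real.log n / (2 * b + 1) + 1)
    (hratio : b + m ≤ (2 * b + 1) * (1 + m / n)) :
    (b + m) * (8 * N + j) ≤ 500 * κ * n * (T + Real.log n) := by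
  have log_nonneg : 0 ≤ Real.log n := Real.log_nonneg hn
  have log_le : Real.log n ≤ n := Real.log_le_self (by linarith)
  have block_le : b + m ≤ 4 * T := by linarith
  have T_le : T ≤ κ * n * T :=
    le_mul_of_one_le_left (by linarith) (one_le_mul_of_one_le_of_one_le hκ hn)
  have covering_le : (b + m) * (8 * N) ≤ 96 * (κ * n * T) := by
    calc (b + m) * (8 * N) ≤ 4 * T * (8 * (3 * κ * n)) := by gcongr
      _ = 96 * (κ * n * T) := by ring
  have decay_le : (b + m) * j ≤ 192 * (κ * n * Real.log n) + 384 * (κ * n * T) + 4 * T := by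
    calc (b + m) * j ≤ (b + m) * (64 * N * Real.log n / (2 * b + 1) + 1) := by gcongr
      _ = (b + m) * (64 * N * Real.log n / (2 * b + 1)) + (b + m) := by ring
      _ ≤ (2 * b + 1) * (1 + m / n) * (64 * N * Real.log n / (2 * b + 1)) + 4 * T := by gcongr
      _ = 64 * N * (Real.log n + m * (Real.log n / n)) + 4 * T := by
          field_simp
      _ ≤ 64 * (3 * κ * n) * (Real.log n + 2 * T * 1) + 4 * T := by
          gcongr
          exact div_le_one_of_le₀ log_le (by linarith)
      _ = 192 * (κ * n * Real.log n) + 384 * (κ * n * T) + 4 * T := by ring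
  nlinarith [mul_nonneg (mul_nonneg (zero_le_one.trans hκ) (zero_le_one.trans hn)) log_nonneg]

/-- A block of the walk consists of `m` equidistributing and of `b = min m n` covering steps: up to
`m` covering steps at most double its length, and `2 * b + 1 ≤ N` caps `b` at the order of `n`. -/
lemma exists_block_parameters {κ T : ℝ} {n : ℕ} (hκ : 1 ≤ κ) (hT : 1 ≤ T) (hn : 2 ≤ n) :
    ∃ m b N j : ℕ, T ≤ m ∧ b ≠ 0 ∧ 2 * b + 1 ≤ N ∧ 2 * κ * n ≤ N ∧
      64 * N * Real.log n / (2 * b + 1) ≤ j ∧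
      ((b : ℝ) + m) * (8 * N + j) ≤ 500 * κ * n * (T + Real.log n) := by
  have two_le : (2 : ℝ) ≤ n := by exact_mod_cast hn
  have ceil_le_add_one {r : ℝ} (hr : 0 ≤ r) := (Nat.ceil_lt_add_one hr).le
  set m := ⌈T⌉₊
  set N := ⌈2 * κ * n⌉₊ + 1 with hN
  have m_pos : 0 < m := Nat.ceil_pos.2 (by linarith)
  have two_mul_le : 2 * n ≤ ⌈2 * κ * n⌉₊ := by
    have : 2 * (n : ℝ) ≤ ⌈2 * κ * n⌉₊ := le_trans (by nlinarith) (Nat.le_ceil _)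
    exact_mod_cast this
  have m_le : (m : ℝ) ≤ 2 * T := by linarith [ceil_le_add_one (by linarith : 0 ≤ T)]
  have N_le : (N : ℝ) ≤ 3 * κ * n := by
    push_cast [hN]
    nlinarith [ceil_le_add_one (by positivity : 0 ≤ 2 * κ * n)]
  refine ⟨m, min m n, N, ⌈64 * N * Real.log n / (2 * (min m n : ℕ) + 1)⌉₊, Nat.le_ceil T, by omega,
    by omega, ?_, Nat.le_ceil _, ?_⟩
  · push_cast [hN]
    linarith [Nat.le_ceil (2 * κ * n)]
  · exact block_length_mul_block_count_le hκ hT (by linarith) m.cast_nonneg m_le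
      (Nat.cast_nonneg _) (Nat.cast_le.2 (min_le_left m n)) N.cast_nonneg N_le
      (ceil_le_add_one (by positivity)) (min_add_le_two_mul_min_add_one_mul m (by omega))

lemma sum_sum_sq_killed_pow_eq_add (P : Matrix V V ℝ) (t : ℕ) (x : V) :
    ∑ S, ∑ y, (killed P S ^ t) x y ^ 2 = ∑ y, (P ^ t) x y ^ 2 +
      ∑ S : Finset V with S.Nonempty, ∑ y, (killed P S ^ t) x y ^ 2 := by
  have filter_eq : univ.filter (fun S : Finset V => ¬S.Nonempty) = {∅} := by
    ext S
    simp
  rw [← sum_filter_not_add_sum_filter univ fun S : Finset V => S.Nonempty, filter_eq,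
    sum_singleton, killed_empty]

lemma avoidProb_le_half (hP : P ∈ doublyStochastic ℝ V) (hirr : Irred P) {N : ℕ}
    (hN0 : N ≠ 0) (hN : 2 * maxHit P ≤ N) (x y : V) : avoidProb P {y} N x ≤ 1 / 2 := by
  have N_pos : 0 < (N : ℝ) := Nat.cast_pos.2 (Nat.pos_of_ne_zero hN0)
  refine le_of_mul_le_mul_left ?_ N_pos
  linarith [mul_avoidProb_le_maxHit hP hirr x y N]

lemma exists_forall_card_mul_sum_sum_sq_killed_pow_le [Nontrivial V]
    (hP : P ∈ Matrix.rowStochastic ℝ V) (hs : P.IsSymm) (hirr : Irred P) {κ T : ℝ} (hκ : 1 ≤ κ)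
    (hT : 1 ≤ T) (hgap : ContractsMeanZero P ((1 - 1 / T) ^ 2))
    (hH : maxHit P ≤ κ * Fintype.card V) :
    ∃ t : ℕ, (t : ℝ) ≤ 500 * κ * Fintype.card V * (T + Real.log (Fintype.card V)) ∧
      ∀ x, Fintype.card V * ∑ S, ∑ y, (killed P S ^ t) x y ^ 2 - 1 ≤ 1 / 16 := by
  have hdP := mem_doublyStochastic_of_isSymm hP hs
  obtain ⟨m, b, N, j, hm, hb, hbN, hN, hj, time_le⟩ :=
    exists_block_parameters hκ hT (Fintype.one_lt_card (α := V))
  have hitting := avoidProb_le_half hdP hirr (by omega) (by linarith : 2 * maxHit P ≤ N)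
  refine ⟨(b + m) * (8 * N + j), by exact_mod_cast time_le, fun x => ?_⟩
  have le_time : 16 * Fintype.card V * T ≤ ((b + m) * (8 * N + j) : ℕ) := by
    have : 2 * (Fintype.card V : ℝ) ≤ N :=
      le_trans (by nlinarith [Nat.cast_nonneg (α := ℝ) (Fintype.card V)]) hN
    calc 16 * Fintype.card V * T = T * (8 * (2 * Fintype.card V)) := by ring
      _ ≤ m * (8 * N) := by gcongr
      _ ≤ ((b + m) * (8 * N + j) : ℕ) := by
          push_cast
          gcongr <;> simp
  have empty_term := card_mul_sum_sq_pow_le hgap hP hs hT le_time x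
  have nonempty_terms := card_mul_sum_nonempty_sum_sq_killed_pow_le hP hs
    (hgap.pow_of_le hdP hT hm) hb hbN hitting hj x
  rw [sum_sum_sq_killed_pow_eq_add, mul_add]
  linarith

lemma chiDist_lampChain_le_iff (hP : P ∈ Matrix.rowStochastic ℝ V) (t : ℕ) :
    (∀ p, chiDist (lampChain P 2) (unif _) t p ≤ 1 / 4) ↔
      ∀ x, Fintype.card V * ∑ S, ∑ y, (killed P S ^ t) x y ^ 2 - 1 ≤ 1 / 16 := by
  simp only [chiDist_lampChain hP, Real.sqrt_le_left (show (0 : ℝ) ≤ 1 / 4 by norm_num),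
    Prod.forall, forall_const]
  norm_num

lemma contractsMeanZero_pow_of_chiDist_le [Nonempty V] (hP : P ∈ Matrix.rowStochastic ℝ V) {t : ℕ}
    (h : ∀ p, chiDist (lampChain P 2) (unif _) t p ≤ 1 / 4) :
    ContractsMeanZero (P ^ t) (1 / 16) := by
  refine contractsMeanZero_of_card_mul_sum_sq_le
    (Matrix.sum_row_of_mem_rowStochastic (pow_mem hP t)) fun x => ?_
  refine le_trans ?_ ((chiDist_lampChain_le_iff hP t).1 h x)
  rw [sum_sum_sq_killed_pow_eq_add]
  gcongr
  exact le_add_of_nonneg_right (sum_nonneg fun S _ => sum_nonneg fun y _ => sq_nonneg _)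

end Mixing

/-! ### Simple random walk on a regular graph -/

section SimpleRandomWalk

lemma nontrivial_of_isRegularOfDegree {V : Type*} [Fintype V] [Nonempty V] {G : SimpleGraph V}
    {d : ℕ} (hG : G.IsRegularOfDegree d) (hd : 0 < d) : Nontrivial V := by
  obtain ⟨x⟩ := ‹Nonempty V›
  obtain ⟨y, hxy⟩ := (G.degree_pos_iff_exists_adj x).1 ((hG.degree_eq x).symm ▸ hd)
  exact ⟨x, y, hxy.ne⟩

variable {V : Type} [Fintype V] [DecidableEq V] {G : SimpleGraph V} {d : ℕ}

lemma srw_nonneg (x y : V) : 0 ≤ srw G d x y := by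
  unfold srw
  positivity

lemma isStoch_srw (hG : G.IsRegularOfDegree d) (hd : 0 < d) : IsStoch (srw G d) := by
  refine ⟨srw_nonneg, fun x => ?_⟩
  simp only [srw]
  rw [← sum_filter, ← SimpleGraph.neighborFinset_eq_filter, sum_const,
    SimpleGraph.card_neighborFinset_eq_degree, hG.degree_eq, nsmul_eq_mul]
  exact mul_inv_cancel₀ (Nat.cast_ne_zero.2 hd.ne')

lemma isSymm_srw : (srw G d).IsSymm := by
  ext x y
  simp only [Matrix.transpose_apply, srw, G.adj_comm]

lemma srw_pow_length_pos (hd : 0 < d) {x y : V} (w : G.Walk x y) :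
    0 < (srw G d ^ w.length) x y := by
  induction w with
  | nil => simp
  | @cons x z y h w ih =>
    rw [SimpleGraph.Walk.length_cons, pow_succ', Matrix.mul_apply]
    refine sum_pos' (fun u _ => ?_) ⟨z, mem_univ z, mul_pos ?_ ih⟩
    · exact mul_nonneg (srw_nonneg x u) (Matrix.pow_apply_nonneg srw_nonneg _ u y)
    · simp [srw, h, hd]

lemma irred_srw (hG : G.Preconnected) (hd : 0 < d) : Irred (srw G d) := fun x y =>
  let ⟨w⟩ := hG x y
  ⟨w.length, srw_pow_length_pos hd w⟩

end SimpleRandomWalk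

theorem lamplighter_L2_mixing_general (κ : ℝ) :
    ∃ c : ℝ, 0 < c ∧
      ∀ (V : Type) [Fintype V] [DecidableEq V] [Nontrivial V] (P : Matrix V V ℝ),
        IsStoch P → P.IsSymm → Irred P → maxHit P ≤ κ * Fintype.card V →
        (tau2 (lampChain P 2) (unif ((V → Fin 2) × V)) : ℝ) ≤
          c * Fintype.card V * (Trel P + Real.log (Fintype.card V)) := by
  refine ⟨500 * max κ 1, by positivity, fun V _ _ _ P hP hs hirr hH => ?_⟩
  have hrow : P ∈ Matrix.rowStochastic ℝ V := Matrix.mem_rowStochastic_iff_sum.2 hP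
  rcases {t | ∀ p, chiDist (lampChain P 2) (unif _) t p ≤ 1 / 4}.eq_empty_or_nonempty
    with never_mixes | ⟨t₀, mixes⟩
  · -- Then `tau2` takes the junk value `sInf ∅ = 0`, as for a bipartite graph.
    have Trel_nonneg := Trel_nonneg (mem_doublyStochastic_of_isSymm hrow hs)
    rw [tau2, never_mixes, Nat.sInf_empty, Nat.cast_zero]
    positivity
  · have contraction := contractsMeanZero_pow_of_chiDist_le hrow mixes
    have hr : (1 / 16 : ℝ) < 1 := by norm_num
    obtain ⟨t, time_le, sum_le⟩ := exists_forall_card_mul_sum_sum_sq_killed_pow_le hrow hs hirr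
      (le_max_right κ 1) (contraction.one_le_Trel hr hrow hs)
      (contraction.contractsMeanZero_Trel hr hrow hs)
      (hH.trans (by gcongr; exact le_max_left κ 1))
    have tau2_le : tau2 (lampChain P 2) (unif _) ≤ t :=
      Nat.sInf_le ((chiDist_lampChain_le_iff hrow t).2 sum_le)
    exact (Nat.cast_le.2 tau2_le).trans time_le

/-- If `G` is a finite connected regular graph whose maximal hitting
time satisfies `H(G) ≤ κ|G|`, then there is `c = c(κ)` with
`τ₂(G^◊) ≤ c |G| (T_rel(G) + log |G|)` for the lamplighter walk on `G^◊`. -/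
theorem lamplighter_L2_mixing (κ : ℝ) (hκ : 0 < κ) :
    ∃ c : ℝ, 0 < c ∧
      ∀ (V : Type) [Fintype V] [DecidableEq V] [Nonempty V]
        (G : SimpleGraph V) (d : ℕ),
        G.Connected → G.IsRegularOfDegree d → 0 < d →
        maxHit (srw G d) ≤ κ * (Fintype.card V : ℝ) →
        (tau2 (lampChain (srw G d) 2) (unif ((V → Fin 2) × V)) : ℝ) ≤
          c * (Fintype.card V : ℝ) *
            (Trel (srw G d) + Real.log (Fintype.card V)) := by
  obtain ⟨c, hc, tau2_le⟩ := lamplighter_L2_mixing_general κ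
  refine ⟨c, hc, fun V _ _ _ G d hconn hreg hd hH => ?_⟩
  have := nontrivial_of_isRegularOfDegree hreg hd
  exact tau2_le V (srw G d) (isStoch_srw hreg hd) isSymm_srw (irred_srw hconn.preconnected hd) hH

end Paper
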